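/- arXiv:2412.20566 — 3 statements merged into one kernel-verified Lean document; each statement's English description precedes it below -/
import Mathlib

section
/- For a bivector B in ℝ_{p,q,r} with effective dimension 2k, the pair of eigenvalues μ = ±1 belongs to the spectrum σ(B) (i.e. P_{2k}(1) = 0) if and only if co∧(B)² = si∧(B)², which in turn is equivalent to Λ^B Λ^{−B} = 0. -/
/-! Common setup: the real geometric algebra `ℝ_{p,q,r}`, grade projections `⟨·⟩_ℓ`,
the commutator product `×`, the wedge powers `W_j`, the outer exponential and outer
trigonometric functions, the characteristic polynomial data `M_μ`, and the
complexification `ℂ ⊗ ℝ_{p,q,r}`. -/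

noncomputable section

open CliffordAlgebra TensorProduct

/-- The diagonal quadratic form of signature `(p,q,r)` on `ℝⁿ`, `n = p+q+r`:
`p` basis vectors of square `+1`, `q` of square `-1`, `r` of square `0`.
`ℝ_{p,q,r} := CliffordAlgebra (sigQ p q r)`. -/
def sigQ (p q r : ℕ) : QuadraticForm ℝ (Fin (p + q + r) → ℝ) :=
  QuadraticMap.weightedSumSquares ℝ
    (fun i : Fin (p + q + r) => if (i : ℕ) < p then (1 : ℝ) else if (i : ℕ) < p + q then -1 else 0)

variable {K : Type*} [Field K] [CharZero K] {M : Type*} [AddCommGroup M] [Module K M]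

/-- The grade-`ℓ` component `⟨x⟩_ℓ` of an element of a Clifford algebra, obtained by
transporting the grading of the exterior algebra along `CliffordAlgebra.equivExterior`. -/
def gradeProj (Q : QuadraticForm K M) (ℓ : ℕ) (x : CliffordAlgebra Q) : CliffordAlgebra Q :=
  letI : Invertible (2 : K) := invertibleOfNonzero two_ne_zero
  (equivExterior Q).symm
    (DirectSum.decompose (fun n : ℕ => ⋀[K]^n M) (equivExterior Q x) ℓ : ExteriorAlgebra K M)

/-- `x` is homogeneous of grade `ℓ`; in particular `IsGrade Q 2 B` says `B` is a bivector. -/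
def IsGrade (Q : QuadraticForm K M) (ℓ : ℕ) (x : CliffordAlgebra Q) : Prop :=
  gradeProj Q ℓ x = x

/-- The commutator product `x × y := (xy - yx)/2`. -/
def cprod {Q : QuadraticForm K M} (x y : CliffordAlgebra Q) : CliffordAlgebra Q :=
  (2 : K)⁻¹ • (x * y - y * x)

/-- `W_j := (1/j!) ⟨B^j⟩_{2j}`, the normalized `j`-fold wedge power of `B`. -/
def Wj (Q : QuadraticForm K M) (B : CliffordAlgebra Q) (j : ℕ) : CliffordAlgebra Q :=
  ((j.factorial : K)⁻¹) • gradeProj Q (2 * j) (B ^ j)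

/-- `B` has effective dimension `2k`: `k` is the largest integer with `W_k ≠ 0`. -/
def HasEffDim (Q : QuadraticForm K M) (B : CliffordAlgebra Q) (k : ℕ) : Prop :=
  Wj Q B k ≠ 0 ∧ ∀ j, k < j → Wj Q B j = 0

/-- The outer exponential `Λ^B = Σ_{j≥0} W_j`; `n` is any bound beyond which all the `W_j`
vanish (e.g. the dimension of the underlying space), so the sum is complete. -/
def outerExp (Q : QuadraticForm K M) (n : ℕ) (B : CliffordAlgebra Q) : CliffordAlgebra Q :=
  ∑ j ∈ Finset.range (n + 1), Wj Q B j

/-- The outer cosine `co∧(B) := (Λ^B + Λ^{-B})/2`. -/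
def coW (Q : QuadraticForm K M) (n : ℕ) (B : CliffordAlgebra Q) : CliffordAlgebra Q :=
  (2 : K)⁻¹ • (outerExp Q n B + outerExp Q n (-B))

/-- The outer sine `si∧(B) := (Λ^B - Λ^{-B})/2`. -/
def siW (Q : QuadraticForm K M) (n : ℕ) (B : CliffordAlgebra Q) : CliffordAlgebra Q :=
  (2 : K)⁻¹ • (outerExp Q n B - outerExp Q n (-B))

/-- `M_μ := Σ_{j=0}^k (-μ)^{k-j} W_j`; the characteristic polynomial of `B` is
`P_{2k}(μ) = M_μ * reverse M_μ`. -/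
def Mpoly (Q : QuadraticForm K M) (B : CliffordAlgebra Q) (k : ℕ) (μ : K) : CliffordAlgebra Q :=
  ∑ j ∈ Finset.range (k + 1), (-μ) ^ (k - j) • Wj Q B j

/-- The wedge (outer) product, `X ∧ Y := ⟨XY⟩_{i+j}` on homogeneous elements of grades `i`, `j`,
extended bilinearly; `n` bounds the occurring grades. -/
def wedgeProd (Q : QuadraticForm K M) (n : ℕ) (x y : CliffordAlgebra Q) : CliffordAlgebra Q :=
  ∑ i ∈ Finset.range (n + 1), ∑ j ∈ Finset.range (n + 1),
    gradeProj Q (i + j) (gradeProj Q i x * gradeProj Q j y)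

/-- The dot product of two vectors, `u · v = ⟨uv⟩₀ = polar(Q)(u,v)/2`, as a scalar. -/
def vdot (Q : QuadraticForm K M) (u v : M) : K := (2 : K)⁻¹ * QuadraticMap.polar Q u v

/-- The complexified quadratic form of signature `(p,q,r)`. -/
def sigQc (p q r : ℕ) : QuadraticForm ℂ (ℂ ⊗[ℝ] (Fin (p + q + r) → ℝ)) :=
  letI : Invertible (2 : ℝ) := invertibleOfNonzero two_ne_zero
  (sigQ p q r).baseChange ℂ

/-- The canonical embedding of `ℝ_{p,q,r}` into its complexification `ℂ ⊗ ℝ_{p,q,r}`. -/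
def toC (p q r : ℕ) (x : CliffordAlgebra (sigQ p q r)) : CliffordAlgebra (sigQc p q r) :=
  letI : Invertible (2 : ℝ) := invertibleOfNonzero two_ne_zero
  ofBaseChange ℂ (sigQ p q r) ((1 : ℂ) ⊗ₜ x)

/-- `v` is an eigenvector of the bivector `B` with eigenvalue `μ`: `v ≠ 0` and `B × v = μ v`. -/
def IsEigen (Q : QuadraticForm K M) (B : CliffordAlgebra Q) (μ : K) (v : M) : Prop :=
  v ≠ 0 ∧ cprod B (ι Q v) = μ • ι Q v

end

/-!
Write `Λ(X) = ∑ X ^ j W_j`. In the exterior algebra, `W_j` becomes `b ^ j / j!` with `b` of degree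
two, because the top-degree part of a Clifford product is the wedge product of the top-degree
parts. Contracting this power by a vector `v` gives `[v, W_{j+1}] = x W_j + W_j x` with `x = v × B`
again a vector, that is, `(v - X x) Λ(X) = Λ(X) (v + X x)`. Replacing `B` by `-B` changes the sign
of `x`, so the product of `Λ(X)` and the corresponding series for `-B` commutes with every
`v - X x`; reading off coefficients, it commutes with all vectors and is central. As `Λ(X)` has
constant coefficient `1` it can be cancelled, so the two series commute, and `Λ^B` commutes with
`Λ^{-B}`. The theorem follows, since `M_1 = (-1) ^ k Λ^{-B}`, reversal exchanges `Λ^B` and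
`Λ^{-B}`, and `co∧(B)² - si∧(B)² = Λ^B Λ^{-B}`.
-/

section DegreeFiltration

open CliffordAlgebra

variable {R M : Type*} [CommRing R] [AddCommGroup M] [Module R M] {Q Q' : QuadraticForm R M}

/-- The elements of `CliffordAlgebra Q` of degree at most `n`, i.e. the span of the products of at
most `n` vectors. -/
def degreeFiltration (Q : QuadraticForm R M) (n : ℕ) : Submodule R (CliffordAlgebra Q) :=
  (1 ⊔ LinearMap.range (ι Q)) ^ n

theorem degreeFiltration_mono (Q : QuadraticForm R M) : Monotone (degreeFiltration Q) :=
  fun _ _ h ↦ pow_le_pow_right₀ le_sup_left h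

theorem algebraMap_mem_degreeFiltration (Q : QuadraticForm R M) (r : R) (n : ℕ) :
    algebraMap R (CliffordAlgebra Q) r ∈ degreeFiltration Q n :=
  have hle : 1 ≤ degreeFiltration Q n := one_le_pow₀ le_sup_left
  hle (Submodule.mem_one.mpr ⟨r, rfl⟩)

theorem ι_mul_mem_degreeFiltration (m : M) {x : CliffordAlgebra Q} {n : ℕ}
    (hx : x ∈ degreeFiltration Q n) : ι Q m * x ∈ degreeFiltration Q (n + 1) := by
  rw [degreeFiltration, pow_succ']
  exact Submodule.mul_mem_mul (Submodule.mem_sup_right ⟨m, rfl⟩) hx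

theorem mul_mem_degreeFiltration {x y : CliffordAlgebra Q} {m n : ℕ}
    (hx : x ∈ degreeFiltration Q m) (hy : y ∈ degreeFiltration Q n) :
    x * y ∈ degreeFiltration Q (m + n) := by
  rw [degreeFiltration, pow_add]
  exact Submodule.mul_mem_mul hx hy

theorem pow_mem_degreeFiltration {x : CliffordAlgebra Q} {d : ℕ}
    (hx : x ∈ degreeFiltration Q d) (j : ℕ) : x ^ j ∈ degreeFiltration Q (d * j) := by
  rw [degreeFiltration, pow_mul]
  exact Submodule.pow_mem_pow _ hx j

theorem degreeFiltration_induction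
    {P : (n : ℕ) → (x : CliffordAlgebra Q) → x ∈ degreeFiltration Q n → Prop}
    (algebraMap : ∀ r, P 0 (algebraMap R _ r) (algebraMap_mem_degreeFiltration Q r 0))
    (add : ∀ n x y hx hy, P n x hx → P n y hy → P n (x + y) (add_mem hx hy))
    (smul : ∀ n (r : R) x hx, P n x hx →
      P (n + 1) (r • x) (Submodule.smul_mem _ r (degreeFiltration_mono Q n.le_succ hx)))
    (ι_mul : ∀ n m x hx, P n x hx → P (n + 1) (ι Q m * x) (ι_mul_mem_degreeFiltration m hx))
    {n : ℕ} {x : CliffordAlgebra Q} (hx : x ∈ degreeFiltration Q n) : P n x hx := by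
  induction hx using Submodule.pow_induction_on_left' with
  | algebraMap r => exact algebraMap r
  | add x y n hx hy ihx ihy => exact add n x y hx hy ihx ihy
  | mem_mul u hu n x hx ih =>
    obtain ⟨_, hr, _, ⟨m, rfl⟩, rfl⟩ := Submodule.mem_sup.mp hu
    obtain ⟨r, rfl⟩ := Submodule.mem_one.mp hr
    simpa only [add_mul, ← Algebra.smul_def] using
      add _ _ _ _ _ (smul n r x hx ih) (ι_mul n m x hx ih)

theorem contractLeft_mem_degreeFiltration (d : Module.Dual R M) {x : CliffordAlgebra Q} {n : ℕ}
    (hx : x ∈ degreeFiltration Q n) : contractLeft d x ∈ degreeFiltration Q n := by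
  induction hx using degreeFiltration_induction with
  | algebraMap r => simp
  | add n x y _ _ hx hy => exact map_add (contractLeft d) x y ▸ add_mem hx hy
  | smul n r x _ ih =>
    rw [map_smul]
    exact degreeFiltration_mono Q n.le_succ (Submodule.smul_mem _ r ih)
  | ι_mul n m x hx ih =>
    rw [contractLeft_ι_mul]
    exact sub_mem (degreeFiltration_mono Q n.le_succ (Submodule.smul_mem _ _ hx))
      (ι_mul_mem_degreeFiltration m ih)

theorem changeForm_mem_degreeFiltration {β : LinearMap.BilinForm R M}
    (h : β.toQuadraticMap = Q' - Q) {x : CliffordAlgebra Q} {n : ℕ}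
    (hx : x ∈ degreeFiltration Q n) : changeForm h x ∈ degreeFiltration Q' n := by
  induction hx using degreeFiltration_induction with
  | algebraMap r => exact changeForm_algebraMap h r ▸ algebraMap_mem_degreeFiltration Q' r 0
  | add n x y _ _ hx hy => exact map_add (changeForm h) x y ▸ add_mem hx hy
  | smul n r x _ ih =>
    rw [map_smul]
    exact degreeFiltration_mono Q' n.le_succ (Submodule.smul_mem _ r ih)
  | ι_mul n m x _ ih =>
    rw [changeForm_ι_mul]
    exact sub_mem (ι_mul_mem_degreeFiltration m ih) <|
      degreeFiltration_mono Q' n.le_succ (contractLeft_mem_degreeFiltration _ ih)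

theorem exteriorPower_le_degreeFiltration (n : ℕ) :
    ⋀[R]^n M ≤ degreeFiltration (0 : QuadraticForm R M) n :=
  pow_le_pow_left' le_sup_right n

end DegreeFiltration

section Symbol

open CliffordAlgebra

variable {R M : Type*} [CommRing R] [AddCommGroup M] [Module R M] {Q : QuadraticForm R M}

/-- The component of degree `n` of an element of the exterior algebra, as a linear map. -/
def exteriorPart (R : Type*) {M : Type*} [CommRing R] [AddCommGroup M] [Module R M] (n : ℕ) :
    ExteriorAlgebra R M →ₗ[R] ExteriorAlgebra R M :=
  GradedAlgebra.proj (fun n : ℕ ↦ ⋀[R]^n M) n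

theorem exteriorPart_of_mem {x : ExteriorAlgebra R M} {n : ℕ} (hx : x ∈ ⋀[R]^n M) :
    exteriorPart R n x = x :=
  DirectSum.decompose_of_mem_same (fun n : ℕ ↦ ⋀[R]^n M) hx

theorem exteriorPart_of_mem_ne {x : ExteriorAlgebra R M} {m n : ℕ} (hx : x ∈ ⋀[R]^m M)
    (hmn : m ≠ n) : exteriorPart R n x = 0 :=
  DirectSum.decompose_of_mem_ne (fun n : ℕ ↦ ⋀[R]^n M) hx hmn

theorem exteriorPart_mem (n : ℕ) (x : ExteriorAlgebra R M) : exteriorPart R n x ∈ ⋀[R]^n M :=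
  SetLike.coe_mem _

theorem algebraMap_mem_exteriorPower_zero (r : R) :
    algebraMap R (ExteriorAlgebra R M) r ∈ ⋀[R]^0 M :=
  SetLike.algebraMap_mem_graded (fun n : ℕ ↦ ⋀[R]^n M) r

theorem exteriorPart_ι_mul (m : M) (x : ExteriorAlgebra R M) (n : ℕ) :
    exteriorPart R (n + 1) (ι 0 m * x) = ι 0 m * exteriorPart R n x := by
  have hm : ι 0 m ∈ ⋀[R]^1 M := (pow_one (LinearMap.range (ExteriorAlgebra.ι R))).ge ⟨m, rfl⟩
  rw [add_comm]
  exact DirectSum.coe_decompose_mul_add_of_left_mem (fun n : ℕ ↦ ⋀[R]^n M) hm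

theorem exteriorPart_eq_zero {x : ExteriorAlgebra R M} {m n : ℕ}
    (hx : x ∈ degreeFiltration (0 : QuadraticForm R M) n) (hnm : n < m) :
    exteriorPart R m x = 0 := by
  induction hx using degreeFiltration_induction generalizing m with
  | algebraMap r =>
    exact exteriorPart_of_mem_ne (algebraMap_mem_exteriorPower_zero r) hnm.ne
  | add n x y _ _ hx hy => rw [map_add, hx hnm, hy hnm, add_zero]
  | smul n r x _ ih => rw [map_smul, ih (n.lt_succ_self.trans hnm), smul_zero]
  | ι_mul n u x _ ih =>
    obtain ⟨m, rfl⟩ := Nat.exists_eq_add_one_of_ne_zero (Nat.ne_zero_of_lt hnm)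
    rw [exteriorPart_ι_mul, ih (Nat.succ_lt_succ_iff.mp hnm), mul_zero]

variable {β : LinearMap.BilinForm R M} (h : β.toQuadraticMap = 0 - Q)

theorem exteriorPart_changeForm_ι_mul (u : M) {x : CliffordAlgebra Q} {n : ℕ}
    (hx : x ∈ degreeFiltration Q n) :
    exteriorPart R (n + 1) (changeForm h (ι Q u * x)) =
      ι 0 u * exteriorPart R n (changeForm h x) := by
  have hcontract : exteriorPart R (n + 1) (contractLeft (β u) (changeForm h x)) = 0 :=
    exteriorPart_eq_zero (contractLeft_mem_degreeFiltration _
      (changeForm_mem_degreeFiltration h hx)) n.lt_succ_self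
  rw [changeForm_ι_mul, map_sub, hcontract, sub_zero, exteriorPart_ι_mul]

theorem exteriorPart_changeForm_mul {x y : CliffordAlgebra Q} {m n : ℕ}
    (hx : x ∈ degreeFiltration Q m) (hy : y ∈ degreeFiltration Q n) :
    exteriorPart R (m + n) (changeForm h (x * y)) =
      exteriorPart R m (changeForm h x) * exteriorPart R n (changeForm h y) := by
  induction hx using degreeFiltration_induction with
  | algebraMap r =>
    have hr : exteriorPart R 0 (algebraMap R (ExteriorAlgebra R M) r) = algebraMap R _ r :=
      exteriorPart_of_mem (algebraMap_mem_exteriorPower_zero r)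
    rw [changeForm_algebraMap, hr, ← Algebra.smul_def, ← Algebra.smul_def, map_smul, map_smul,
      zero_add]
  | add m x x' _ _ hx hx' => rw [add_mul, map_add, map_add, map_add, map_add, hx, hx', add_mul]
  | smul m r x hx _ =>
    rw [smul_mul_assoc, map_smul, map_smul, map_smul, map_smul,
      exteriorPart_eq_zero (changeForm_mem_degreeFiltration h hx) m.lt_succ_self,
      exteriorPart_eq_zero (changeForm_mem_degreeFiltration h
        (mul_mem_degreeFiltration hx hy)) (Nat.add_lt_add_right m.lt_succ_self n),
      smul_zero, zero_mul]
  | ι_mul m u x hx ih =>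
    rw [mul_assoc, exteriorPart_changeForm_ι_mul h u hx, mul_assoc, ← ih, add_right_comm,
      exteriorPart_changeForm_ι_mul h u (mul_mem_degreeFiltration hx hy)]

theorem exteriorPart_changeForm_pow {x : CliffordAlgebra Q} {d : ℕ} (hx : x ∈ degreeFiltration Q d)
    (j : ℕ) :
    exteriorPart R (d * j) (changeForm h (x ^ j)) = exteriorPart R d (changeForm h x) ^ j := by
  induction j with
  | zero =>
    rw [pow_zero, pow_zero, changeForm_one, mul_zero]
    exact exteriorPart_of_mem (SetLike.one_mem_graded fun n : ℕ ↦ ⋀[R]^n M)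
  | succ j ih =>
    rw [pow_succ', pow_succ', mul_add_one, add_comm,
      exteriorPart_changeForm_mul h hx (pow_mem_degreeFiltration hx j), ih]

end Symbol

section Contraction

open CliffordAlgebra

variable {R M : Type*} [CommRing R] [AddCommGroup M] [Module R M] {Q Q' : QuadraticForm R M}

theorem involute_contractLeft (d : Module.Dual R M) (x : CliffordAlgebra Q) :
    involute (contractLeft d x) = -contractLeft d (involute x) := by
  induction x using CliffordAlgebra.left_induction with
  | algebraMap r => simp
  | add x y hx hy => simp only [map_add, hx, hy, neg_add]
  | ι_mul x m hx =>
    simp only [contractLeft_ι_mul, map_sub, map_mul, map_smul, involute_ι, hx, neg_mul, map_neg,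
      mul_neg]
    abel

theorem contractLeft_mul (d : Module.Dual R M) (x y : CliffordAlgebra Q) :
    contractLeft d (x * y) = contractLeft d x * y + involute x * contractLeft d y := by
  induction x using CliffordAlgebra.left_induction with
  | algebraMap r => simp [contractLeft_algebraMap_mul]
  | add x x' hx hx' => simp only [add_mul, map_add, hx, hx']; abel
  | ι_mul x m hx =>
    simp only [mul_assoc, contractLeft_ι_mul, hx, map_mul, involute_ι, neg_mul, mul_add, sub_mul,
      smul_mul_assoc]
    abel

theorem contractLeft_pow (d : Module.Dual R M) {x : CliffordAlgebra Q} (hx : involute x = x)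
    (hcomm : Commute x (contractLeft d x)) (n : ℕ) :
    contractLeft d (x ^ (n + 1)) = (n + 1) • (contractLeft d x * x ^ n) := by
  induction n with
  | zero => simp
  | succ n ih =>
    rw [pow_succ', contractLeft_mul, hx, ih, mul_smul_comm, ← mul_assoc, hcomm.eq, mul_assoc,
      ← pow_succ', succ_nsmul' _ (n + 1)]

theorem contractLeft_mul_ι (d : Module.Dual R M) (x : CliffordAlgebra Q) (m : M) :
    contractLeft d (x * ι Q m) = contractLeft d x * ι Q m + d m • involute x := by
  rw [contractLeft_mul, contractLeft_ι, ← Algebra.commutes, ← Algebra.smul_def]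

theorem reverse_contractLeft (d : Module.Dual R M) (x : CliffordAlgebra Q) :
    reverse (contractLeft d x) = -contractLeft d (involute (reverse x)) := by
  induction x using CliffordAlgebra.left_induction with
  | algebraMap r => simp [reverse.commutes]
  | add x y hx hy => simp only [map_add, hx, hy, neg_add]
  | ι_mul x m hx =>
    simp only [contractLeft_ι_mul, map_sub, map_smul, reverse.map_mul, reverse_ι, hx, map_mul,
      involute_ι, mul_neg, map_neg, neg_mul, contractLeft_mul_ι, involute_involute]
    abel

theorem reverse_pow (x : CliffordAlgebra Q) (n : ℕ) : reverse (x ^ n) = reverse x ^ n := by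
  induction n with
  | zero => rw [pow_zero, pow_zero, reverse.map_one]
  | succ n ih => rw [pow_succ, reverse.map_mul, ih, ← pow_succ']

variable {β : LinearMap.BilinForm R M} (h : β.toQuadraticMap = Q' - Q)

theorem changeForm_involute (x : CliffordAlgebra Q) :
    changeForm h (involute x) = involute (changeForm h x) := by
  induction x using CliffordAlgebra.left_induction with
  | algebraMap r => simp
  | add x y hx hy => simp only [map_add, hx, hy]
  | ι_mul x m hx =>
    simp only [map_mul, involute_ι, neg_mul, map_neg, changeForm_ι_mul, hx, map_sub,
      involute_contractLeft]
    abel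

theorem changeForm_mul_ι (hβ : β.IsSymm) (x : CliffordAlgebra Q) (m : M) :
    changeForm h (x * ι Q m) =
      changeForm h x * ι Q' m + contractLeft (β m) (involute (changeForm h x)) := by
  induction x using CliffordAlgebra.left_induction with
  | algebraMap r => simp [← Algebra.smul_def]
  | add x y hx hy => simp only [map_add, hx, hy, add_mul]; abel
  | ι_mul x m' hx =>
    have hβm : β m m' = β m' m := hβ.eq m m'
    simp only [mul_assoc, changeForm_ι_mul, hx, map_add, map_sub, map_mul, involute_ι,
      involute_contractLeft, contractLeft_ι_mul, contractLeft_mul_ι, mul_add, sub_mul, neg_mul,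
      map_neg, hβm, contractLeft_comm (β m) (β m')]
    abel

theorem changeForm_reverse (hβ : β.IsSymm) (x : CliffordAlgebra Q) :
    changeForm h (reverse x) = reverse (changeForm h x) := by
  induction x using CliffordAlgebra.left_induction with
  | algebraMap r => simp [reverse.commutes]
  | add x y hx hy => simp only [map_add, hx, hy]
  | ι_mul x m hx =>
    rw [reverse.map_mul, reverse_ι, changeForm_mul_ι h hβ, hx, changeForm_ι_mul, map_sub,
      reverse.map_mul, reverse_ι, reverse_contractLeft, sub_neg_eq_add]

end Contraction

section Exterior

open CliffordAlgebra

variable {R M : Type*} [CommRing R] [AddCommGroup M] [Module R M]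

theorem exteriorAlgebra_mul_ι (x : ExteriorAlgebra R M) (m : M) :
    x * ι 0 m = ι 0 m * involute x := by
  induction x using CliffordAlgebra.left_induction with
  | algebraMap r => rw [AlgHom.commutes, Algebra.commutes]
  | add x y hx hy => rw [add_mul, hx, hy, map_add, mul_add]
  | ι_mul x m' hx =>
    have hanti : ι 0 m' * ι 0 m = -(ι (0 : QuadraticForm R M) m * ι 0 m') :=
      eq_neg_of_add_eq_zero_left (ExteriorAlgebra.ι_add_mul_swap m' m)
    rw [mul_assoc, hx, ← mul_assoc, hanti, map_mul, involute_ι, neg_mul, neg_mul, mul_neg,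
      mul_assoc]

variable {b : ExteriorAlgebra R M}

theorem involute_of_mem_exteriorPower_two (hb : b ∈ ⋀[R]^2 M) : involute b = b :=
  involute_eq_of_mem_even (Submodule.mem_iSup_of_mem ⟨2, rfl⟩ hb)

theorem reverse_of_mem_exteriorPower_two (hb : b ∈ ⋀[R]^2 M) : reverse b = -b := by
  rw [ExteriorAlgebra.exteriorPower, pow_two] at hb
  induction hb using Submodule.mul_induction_on' with
  | mem_mul_mem u hu v hv =>
    obtain ⟨⟨u, rfl⟩, ⟨v, rfl⟩⟩ := And.intro hu hv
    rw [reverse.map_mul, reverse_ι, reverse_ι, exteriorAlgebra_mul_ι, involute_ι, mul_neg]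
  | add x _ y _ hx hy => rw [map_add, hx, hy, neg_add]

theorem contractLeft_mem_range_ι_of_mem_exteriorPower_two (hb : b ∈ ⋀[R]^2 M)
    (d : Module.Dual R M) :
    contractLeft d b ∈ LinearMap.range (ι (0 : QuadraticForm R M)) := by
  rw [ExteriorAlgebra.exteriorPower, pow_two] at hb
  induction hb using Submodule.mul_induction_on' with
  | mem_mul_mem u hu v hv =>
    obtain ⟨⟨u, rfl⟩, ⟨v, rfl⟩⟩ := And.intro hu hv
    refine ⟨d u • v - d v • u, ?_⟩
    rw [contractLeft_ι_mul, contractLeft_ι, ← Algebra.commutes, ← Algebra.smul_def, map_sub,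
      map_smul, map_smul]
  | add x _ y _ hx hy => exact map_add (contractLeft d) x y ▸ add_mem hx hy

theorem contractLeft_pow_of_mem_exteriorPower_two (hb : b ∈ ⋀[R]^2 M) (d : Module.Dual R M)
    (n : ℕ) :
    contractLeft d (b ^ (n + 1)) = (n + 1) • (contractLeft d b * b ^ n) := by
  have hinv := involute_of_mem_exteriorPower_two hb
  obtain ⟨m, hm⟩ := contractLeft_mem_range_ι_of_mem_exteriorPower_two hb d
  have hcomm : Commute b (contractLeft d b) := by
    rw [← hm, Commute, SemiconjBy, exteriorAlgebra_mul_ι, hinv]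
  exact contractLeft_pow d hinv hcomm n

variable {Q : QuadraticForm R M} {β : LinearMap.BilinForm R M} (h : β.toQuadraticMap = 0 - Q)

theorem changeForm_ι_mul_sub_involute_mul_ι (hβ : β.IsSymm) (m : M) (x : CliffordAlgebra Q) :
    changeForm h (ι Q m * x - involute x * ι Q m) =
      -(2 • contractLeft (β m) (changeForm h x)) := by
  rw [map_sub, changeForm_ι_mul, changeForm_mul_ι h hβ, changeForm_involute, involute_involute,
    exteriorAlgebra_mul_ι, involute_involute]
  abel

theorem changeForm_ι_mul_add_involute_mul_ι (hβ : β.IsSymm) (m : M) (x : CliffordAlgebra Q) :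
    changeForm h (ι Q m * x + involute x * ι Q m) = 2 • (ι 0 m * changeForm h x) := by
  rw [map_add, changeForm_ι_mul, changeForm_mul_ι h hβ, changeForm_involute, involute_involute,
    exteriorAlgebra_mul_ι, involute_involute]
  abel

end Exterior

section WedgePowers

open CliffordAlgebra

variable {K : Type*} [Field K] [CharZero K] {M : Type*} [AddCommGroup M] [Module K M]
  {Q : QuadraticForm K M} {B : CliffordAlgebra Q}

/-- The choice of `2⁻¹` made in `gradeProj`. -/
noncomputable local instance : Invertible (2 : K) := invertibleOfNonzero two_ne_zero

theorem associated_neg_isSymm (Q : QuadraticForm K M) :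
    LinearMap.BilinForm.IsSymm (QuadraticMap.associated (R := K) (-Q)) :=
  ⟨QuadraticMap.associated_isSymm K (-Q)⟩

theorem equivExterior_apply (x : CliffordAlgebra Q) :
    equivExterior Q x = changeForm changeForm.associated_neg_proof x :=
  rfl

theorem equivExterior_gradeProj (ℓ : ℕ) (x : CliffordAlgebra Q) :
    equivExterior Q (gradeProj Q ℓ x) = exteriorPart K ℓ (equivExterior Q x) :=
  (equivExterior Q).apply_symm_apply _

theorem IsGrade.equivExterior_mem {ℓ : ℕ} {x : CliffordAlgebra Q} (hx : IsGrade Q ℓ x) :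
    equivExterior Q x ∈ ⋀[K]^ℓ M := by
  rw [← hx, equivExterior_gradeProj]
  exact exteriorPart_mem ℓ _

theorem IsGrade.mem_degreeFiltration {ℓ : ℕ} {x : CliffordAlgebra Q} (hx : IsGrade Q ℓ x) :
    x ∈ degreeFiltration Q ℓ := by
  rw [← (equivExterior Q).symm_apply_apply x]
  exact changeForm_mem_degreeFiltration (changeForm.neg_proof changeForm.associated_neg_proof)
    (exteriorPower_le_degreeFiltration ℓ hx.equivExterior_mem)

theorem IsGrade.neg {ℓ : ℕ} {x : CliffordAlgebra Q} (hx : IsGrade Q ℓ x) : IsGrade Q ℓ (-x) := by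
  apply (equivExterior Q).injective
  rw [equivExterior_gradeProj, map_neg, map_neg, exteriorPart_of_mem hx.equivExterior_mem]

theorem Wj_zero (B : CliffordAlgebra Q) : Wj Q B 0 = 1 := by
  apply (equivExterior Q).injective
  rw [Wj, map_smul, equivExterior_gradeProj, pow_zero, Nat.factorial_zero, Nat.cast_one, inv_one,
    one_smul, equivExterior_apply, changeForm_one]
  exact exteriorPart_of_mem (SetLike.one_mem_graded fun n : ℕ ↦ ⋀[K]^n M)

theorem Wj_neg (B : CliffordAlgebra Q) (j : ℕ) : Wj Q (-B) j = (-1 : K) ^ j • Wj Q B j := by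
  apply (equivExterior Q).injective
  rw [Wj, Wj, map_smul, map_smul, map_smul, equivExterior_gradeProj, equivExterior_gradeProj,
    ← neg_one_smul K B, smul_pow, map_smul, map_smul, smul_comm]

theorem Wj_eq_zero_of_finrank_lt [FiniteDimensional K M] (B : CliffordAlgebra Q) {j : ℕ}
    (hj : Module.finrank K M < 2 * j) : Wj Q B j = 0 := by
  have : Subsingleton (⋀[K]^(2 * j) M) := Module.finrank_zero_iff.mp <| by
    rw [exteriorPower.finrank_eq, Nat.choose_eq_zero_of_lt hj]
  have hzero (x : ExteriorAlgebra K M) : exteriorPart K (2 * j) x = 0 :=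
    congrArg Subtype.val (Subsingleton.elim (⟨_, exteriorPart_mem (2 * j) x⟩ : ⋀[K]^(2 * j) M) 0)
  apply (equivExterior Q).injective
  rw [Wj, map_smul, equivExterior_gradeProj, hzero, smul_zero, map_zero]

theorem HasEffDim.two_mul_le_finrank [FiniteDimensional K M] {k : ℕ} (hk : HasEffDim Q B k) :
    2 * k ≤ Module.finrank K M :=
  not_lt.mp fun hlt ↦ hk.1 (Wj_eq_zero_of_finrank_lt B hlt)

theorem equivExterior_Wj (hB : IsGrade Q 2 B) (j : ℕ) :
    equivExterior Q (Wj Q B j) = (j.factorial : K)⁻¹ • equivExterior Q B ^ j := by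
  rw [Wj, map_smul, equivExterior_gradeProj, equivExterior_apply (B ^ j),
    exteriorPart_changeForm_pow _ hB.mem_degreeFiltration, ← equivExterior_apply,
    exteriorPart_of_mem hB.equivExterior_mem]

theorem involute_eq_of_isGrade_two (hB : IsGrade Q 2 B) : involute B = B := by
  apply (equivExterior Q).injective
  rw [equivExterior_apply, changeForm_involute, ← equivExterior_apply,
    involute_of_mem_exteriorPower_two hB.equivExterior_mem]

theorem contractLeft_equivExterior_Wj_succ (hB : IsGrade Q 2 B) (j : ℕ) (d : Module.Dual K M) :
    contractLeft d (equivExterior Q (Wj Q B (j + 1))) =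
      contractLeft d (equivExterior Q B) * equivExterior Q (Wj Q B j) := by
  have hfact : ((j + 1).factorial : K)⁻¹ * (j + 1 : ℕ) = (j.factorial : K)⁻¹ := by
    rw [Nat.factorial_succ, Nat.cast_mul, mul_inv_rev,
      inv_mul_cancel_right₀ (Nat.cast_ne_zero.mpr j.succ_ne_zero)]
  rw [equivExterior_Wj hB, equivExterior_Wj hB, map_smul,
    contractLeft_pow_of_mem_exteriorPower_two hB.equivExterior_mem, ← Nat.cast_smul_eq_nsmul K,
    smul_smul, hfact, mul_smul_comm]

theorem involute_Wj (hB : IsGrade Q 2 B) (j : ℕ) : involute (Wj Q B j) = Wj Q B j := by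
  apply (equivExterior Q).injective
  rw [equivExterior_apply, changeForm_involute, ← equivExterior_apply, equivExterior_Wj hB,
    map_smul, map_pow, involute_of_mem_exteriorPower_two hB.equivExterior_mem]

theorem reverse_Wj (hB : IsGrade Q 2 B) (j : ℕ) : reverse (Wj Q B j) = (-1 : K) ^ j • Wj Q B j := by
  apply (equivExterior Q).injective
  rw [equivExterior_apply, changeForm_reverse _ (associated_neg_isSymm Q), ← equivExterior_apply,
    map_smul, equivExterior_Wj hB, map_smul, reverse_pow,
    reverse_of_mem_exteriorPower_two hB.equivExterior_mem, ← neg_one_smul K (equivExterior Q B),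
    smul_pow, smul_comm]

theorem equivExterior_cprod_ι (hB : IsGrade Q 2 B) (v : M) :
    equivExterior Q (cprod (ι Q v) B) =
      -contractLeft (QuadraticMap.associated (R := K) (-Q) v) (equivExterior Q B) := by
  have hcomm := changeForm_ι_mul_sub_involute_mul_ι changeForm.associated_neg_proof
    (associated_neg_isSymm Q) v B
  rw [involute_eq_of_isGrade_two hB, ← equivExterior_apply, ← equivExterior_apply] at hcomm
  rw [cprod, map_smul, hcomm, ← Nat.cast_smul_eq_nsmul K, ← smul_neg, Nat.cast_ofNat,
    inv_smul_smul₀ two_ne_zero]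

theorem cprod_ι_mem_range_ι (hB : IsGrade Q 2 B) (v : M) :
    cprod (ι Q v) B ∈ LinearMap.range (ι Q) := by
  obtain ⟨w, hw⟩ := neg_mem (contractLeft_mem_range_ι_of_mem_exteriorPower_two
    hB.equivExterior_mem (QuadraticMap.associated (R := K) (-Q) v))
  refine ⟨w, (equivExterior Q).injective ?_⟩
  rw [equivExterior_cprod_ι hB, ← hw, equivExterior_apply, changeForm_ι]

theorem ι_mul_Wj_succ_sub_Wj_succ_mul_ι (hB : IsGrade Q 2 B) (j : ℕ) (v : M) :
    ι Q v * Wj Q B (j + 1) - Wj Q B (j + 1) * ι Q v =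
      cprod (ι Q v) B * Wj Q B j + Wj Q B j * cprod (ι Q v) B := by
  obtain ⟨w, hw⟩ := cprod_ι_mem_range_ι hB v
  have hιw : ι 0 w = equivExterior Q (cprod (ι Q v) B) := by
    rw [← hw, equivExterior_apply, changeForm_ι]
  have hsub := changeForm_ι_mul_sub_involute_mul_ι changeForm.associated_neg_proof
    (associated_neg_isSymm Q) v (Wj Q B (j + 1))
  have hadd := changeForm_ι_mul_add_involute_mul_ι changeForm.associated_neg_proof
    (associated_neg_isSymm Q) w (Wj Q B j)
  rw [involute_Wj hB, ← equivExterior_apply, ← equivExterior_apply] at hsub hadd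
  apply (equivExterior Q).injective
  rw [← hw, hsub, hadd, contractLeft_equivExterior_Wj_succ hB, hιw, equivExterior_cprod_ι hB,
    neg_mul, smul_neg]

end WedgePowers

section Polynomial

open Polynomial

variable {A : Type*} [Ring A]

theorem isLeftRegular_of_isUnit_coeff_zero {p : A[X]} (hp : IsUnit (p.coeff 0)) :
    IsLeftRegular p := by
  intro q r hqr
  have hunit : IsUnit (p : PowerSeries A) :=
    PowerSeries.isUnit_iff_constantCoeff.mpr (by simpa using hp)
  refine coe_injective A (hunit.isRegular.left ?_)
  simpa only [coe_mul] using congrArg (fun s : A[X] ↦ (s : PowerSeries A)) hqr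

theorem commute_of_forall_commute_coeff {p : A[X]} (hp : ∀ n a, Commute (p.coeff n) a)
    (q : A[X]) : Commute p q := by
  ext n
  rw [coeff_mul, coeff_mul, ← Finset.Nat.sum_antidiagonal_swap]
  exact Finset.sum_congr rfl fun ij _ ↦ hp ij.2 (q.coeff ij.1)

theorem coeff_mul_X_mul_C_succ (p : A[X]) (a : A) (n : ℕ) :
    (p * (X * C a)).coeff (n + 1) = p.coeff n * a := by
  rw [← mul_assoc, coeff_mul_C, coeff_mul_X]

theorem coeff_X_mul_C_mul_succ (p : A[X]) (a : A) (n : ℕ) :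
    (X * C a * p).coeff (n + 1) = a * p.coeff n := by
  rw [mul_assoc, coeff_X_mul, coeff_C_mul]

theorem commute_coeff_of_commute_C_sub_X_mul_C {S : Set A} {p : A[X]}
    (hp : ∀ s ∈ S, ∃ s' ∈ S, Commute p (C s - X * C s')) (n : ℕ) {s : A} (hs : s ∈ S) :
    Commute (p.coeff n) s := by
  induction n generalizing s with
  | zero =>
    obtain ⟨s', -, hcomm⟩ := hp s hs
    simpa [mul_sub, sub_mul, mul_coeff_zero, commute_iff_eq] using congrArg (coeff · 0) hcomm.eq
  | succ n ih =>
    obtain ⟨s', hs', hcomm⟩ := hp s hs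
    simpa only [mul_sub, sub_mul, coeff_sub, coeff_mul_C, coeff_C_mul, coeff_mul_X_mul_C_succ,
      coeff_X_mul_C_mul_succ, (ih hs').eq, sub_left_inj, ← commute_iff_eq] using
      congrArg (coeff · (n + 1)) hcomm.eq

theorem commute_eval_one {p q : A[X]} (hpq : Commute p q) : Commute (p.eval 1) (q.eval 1) :=
  hpq.map (eval₂RingHom' (RingHom.id A) 1 fun a ↦ Commute.one_right a)

end Polynomial

section OuterExponential

open CliffordAlgebra Polynomial

theorem commute_of_forall_commute_ι {R M : Type*} [CommRing R] [AddCommGroup M] [Module R M]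
    {Q : QuadraticForm R M} {c : CliffordAlgebra Q} (hc : ∀ m, Commute c (ι Q m))
    (x : CliffordAlgebra Q) : Commute c x := by
  induction x using CliffordAlgebra.left_induction with
  | algebraMap r => exact (Algebra.commutes r c).symm
  | add x y hx hy => exact hx.add_right hy
  | ι_mul x m hx => exact (hc m).mul_right hx

theorem cprod_neg {K M : Type*} [Field K] [AddCommGroup M] [Module K M] {Q : QuadraticForm K M}
    (x y : CliffordAlgebra Q) : cprod x (-y) = -cprod x y := by
  rw [cprod, cprod, mul_neg, neg_mul, ← smul_neg, neg_sub', sub_eq_add_neg]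

variable {K : Type*} [Field K] [CharZero K] {M : Type*} [AddCommGroup M] [Module K M]
  {Q : QuadraticForm K M} {B : CliffordAlgebra Q} {k : ℕ}

/-- The outer exponential `Λ^{XB} = ∑ X^j W_j` of `B` scaled by a formal variable `X`, truncated at
degree `n`. -/
noncomputable def outerExpPoly (Q : QuadraticForm K M) (n : ℕ) (B : CliffordAlgebra Q) :
    (CliffordAlgebra Q)[X] :=
  ∑ j ∈ Finset.range (n + 1), monomial j (Wj Q B j)

theorem eval_one_outerExpPoly (n : ℕ) (B : CliffordAlgebra Q) :
    (outerExpPoly Q n B).eval 1 = outerExp Q n B := by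
  simp only [outerExpPoly, outerExp, eval_finsetSum, eval_monomial, one_pow, mul_one]

namespace HasEffDim

theorem neg (hk : HasEffDim Q B k) : HasEffDim Q (-B) k := by
  refine ⟨?_, fun j hj ↦ ?_⟩
  · rw [Wj_neg]
    exact smul_ne_zero (pow_ne_zero k (neg_ne_zero.mpr one_ne_zero)) hk.1
  · rw [Wj_neg, hk.2 j hj, smul_zero]

theorem coeff_outerExpPoly (hk : HasEffDim Q B k) (j : ℕ) :
    (outerExpPoly Q k B).coeff j = Wj Q B j := by
  simp only [outerExpPoly, finsetSum_coeff, coeff_monomial, Finset.sum_ite_eq',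
    Finset.mem_range, ite_eq_left_iff, not_lt]
  exact fun hj ↦ (hk.2 j hj).symm

theorem outerExp_eq_of_le (hk : HasEffDim Q B k) {n : ℕ} (hkn : k ≤ n) :
    outerExp Q n B = outerExp Q k B := by
  refine (Finset.sum_subset (Finset.range_mono (Nat.succ_le_succ hkn)) fun j _ hj ↦ ?_).symm
  exact hk.2 j (by simpa using hj)

theorem semiconjBy_outerExpPoly (hB : IsGrade Q 2 B) (hk : HasEffDim Q B k) (v : M) :
    SemiconjBy (outerExpPoly Q k B) (C (ι Q v) + X * C (cprod (ι Q v) B))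
      (C (ι Q v) - X * C (cprod (ι Q v) B)) := by
  ext j
  cases j with
  | zero => simp [mul_coeff_zero, hk.coeff_outerExpPoly, Wj_zero]
  | succ j =>
    have hrel := ι_mul_Wj_succ_sub_Wj_succ_mul_ι hB j v
    simp only [mul_add, sub_mul, coeff_add, coeff_sub, coeff_mul_C, coeff_C_mul,
      coeff_mul_X_mul_C_succ, coeff_X_mul_C_mul_succ, hk.coeff_outerExpPoly]
    rw [eq_sub_iff_add_eq, add_assoc, add_comm (_ * _) (_ * _), ← hrel]
    abel

theorem commute_coeff_outerExpPoly_mul_neg (hB : IsGrade Q 2 B) (hk : HasEffDim Q B k) (n : ℕ)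
    (x : CliffordAlgebra Q) :
    Commute ((outerExpPoly Q k B * outerExpPoly Q k (-B)).coeff n) x := by
  refine commute_of_forall_commute_ι (fun v ↦ ?_) x
  refine commute_coeff_of_commute_C_sub_X_mul_C (S := Set.range (ι Q)) ?_ n ⟨v, rfl⟩
  rintro _ ⟨v, rfl⟩
  have hneg := hk.neg.semiconjBy_outerExpPoly hB.neg v
  rw [cprod_neg, C_neg, mul_neg, ← sub_eq_add_neg, sub_neg_eq_add] at hneg
  exact ⟨_, cprod_ι_mem_range_ι hB v, (hk.semiconjBy_outerExpPoly hB v).mul_left hneg⟩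

theorem commute_outerExpPoly_neg (hB : IsGrade Q 2 B) (hk : HasEffDim Q B k) :
    Commute (outerExpPoly Q k B) (outerExpPoly Q k (-B)) := by
  have hunit : IsUnit ((outerExpPoly Q k B).coeff 0) := by
    rw [hk.coeff_outerExpPoly, Wj_zero]
    exact isUnit_one
  have hcentral := commute_of_forall_commute_coeff (hk.commute_coeff_outerExpPoly_mul_neg hB)
    (outerExpPoly Q k B)
  refine isLeftRegular_of_isUnit_coeff_zero hunit ?_
  simpa only [mul_assoc] using hcentral.eq.symm

theorem commute_outerExp_neg (hB : IsGrade Q 2 B) (hk : HasEffDim Q B k) :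
    Commute (outerExp Q k B) (outerExp Q k (-B)) := by
  simpa only [eval_one_outerExpPoly] using commute_eval_one (hk.commute_outerExpPoly_neg hB)

end HasEffDim

theorem reverse_outerExp (hB : IsGrade Q 2 B) (n : ℕ) :
    reverse (outerExp Q n B) = outerExp Q n (-B) := by
  simp only [outerExp, map_sum, reverse_Wj hB, Wj_neg]

theorem Mpoly_one (B : CliffordAlgebra Q) (k : ℕ) :
    Mpoly Q B k 1 = (-1 : K) ^ k • outerExp Q k (-B) := by
  rw [Mpoly, outerExp, Finset.smul_sum]
  refine Finset.sum_congr rfl fun j hj ↦ ?_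
  obtain ⟨i, rfl⟩ := Nat.exists_eq_add_of_le (Finset.mem_range_succ_iff.mp hj)
  rw [Wj_neg, smul_smul, add_tsub_cancel_left, add_comm j i, pow_add, mul_assoc, ← mul_pow,
    neg_one_mul, neg_neg, one_pow, mul_one]

theorem Mpoly_one_mul_reverse (hB : IsGrade Q 2 B) (k : ℕ) :
    Mpoly Q B k 1 * reverse (Mpoly Q B k 1) = outerExp Q k (-B) * outerExp Q k B := by
  rw [Mpoly_one, map_smul, ← reverse_outerExp hB, reverse_reverse, smul_mul_smul_comm, ← mul_pow,
    neg_one_mul, neg_neg, one_pow, one_smul]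

theorem coW_add_siW (n : ℕ) (B : CliffordAlgebra Q) : coW Q n B + siW Q n B = outerExp Q n B := by
  rw [coW, siW, ← smul_add, add_add_sub_cancel, ← two_smul K, inv_smul_smul₀ two_ne_zero]

theorem coW_sub_siW (n : ℕ) (B : CliffordAlgebra Q) :
    coW Q n B - siW Q n B = outerExp Q n (-B) := by
  rw [coW, siW, ← smul_sub, add_sub_sub_cancel, ← two_smul K, inv_smul_smul₀ two_ne_zero]

theorem coW_sq_sub_siW_sq {n : ℕ} (hcomm : Commute (outerExp Q n B) (outerExp Q n (-B))) :
    coW Q n B ^ 2 - siW Q n B ^ 2 = outerExp Q n B * outerExp Q n (-B) := by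
  have hcs : Commute (coW Q n B) (siW Q n B) :=
    (((Commute.refl _).sub_right hcomm).add_left
      (hcomm.symm.sub_right (Commute.refl _))).smul_left _ |>.smul_right _
  rw [hcs.sq_sub_sq, coW_add_siW, coW_sub_siW]

end OuterExponential

open CliffordAlgebra in
theorem pm_one_in_spectrum_iff_general {K : Type*} [Field K] [CharZero K] {M : Type*}
    [AddCommGroup M] [Module K M] (Q : QuadraticForm K M) (B : CliffordAlgebra Q)
    (hB : IsGrade Q 2 B) (k n : ℕ) (hk : HasEffDim Q B k) (hkn : k ≤ n) :
    (Mpoly Q B k 1 * reverse (Mpoly Q B k 1) = 0 ↔ coW Q n B ^ 2 = siW Q n B ^ 2) ∧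
      (coW Q n B ^ 2 = siW Q n B ^ 2 ↔ outerExp Q n B * outerExp Q n (-B) = 0) := by
  have hcomm : Commute (outerExp Q n B) (outerExp Q n (-B)) := by
    rw [hk.outerExp_eq_of_le hkn, hk.neg.outerExp_eq_of_le hkn]
    exact hk.commute_outerExp_neg hB
  have htrig : coW Q n B ^ 2 = siW Q n B ^ 2 ↔ outerExp Q n B * outerExp Q n (-B) = 0 := by
    rw [← sub_eq_zero, coW_sq_sub_siW_sq hcomm]
  refine ⟨?_, htrig⟩
  rw [Mpoly_one_mul_reverse hB, htrig, hcomm.eq, hk.outerExp_eq_of_le hkn,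
    hk.neg.outerExp_eq_of_le hkn]

open CliffordAlgebra in
/-- for a bivector `B` of effective dimension `2k`, the eigenvalues `μ = ±1`
belong to the spectrum of `B` (i.e. `P_{2k}(1) = M₁ M̃₁ = 0`) iff `co∧(B)² = si∧(B)²`,
which in turn is equivalent to `Λ^B Λ^{-B} = 0`. -/
theorem pm_one_in_spectrum_iff (p q r : ℕ) (B : CliffordAlgebra (sigQ p q r))
    (hB : IsGrade (sigQ p q r) 2 B) (k : ℕ) (hk : HasEffDim (sigQ p q r) B k) :
    ((Mpoly (sigQ p q r) B k 1 * reverse (Mpoly (sigQ p q r) B k 1) = 0) ↔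
      coW (sigQ p q r) (p + q + r) B ^ 2 = siW (sigQ p q r) (p + q + r) B ^ 2) ∧
    ((coW (sigQ p q r) (p + q + r) B ^ 2 = siW (sigQ p q r) (p + q + r) B ^ 2) ↔
      outerExp (sigQ p q r) (p + q + r) B * outerExp (sigQ p q r) (p + q + r) (-B) = 0) := by
  have hkn : k ≤ p + q + r := by
    have hfin := hk.two_mul_le_finrank
    rw [Module.finrank_fin_fun] at hfin
    omega
  exact pm_one_in_spectrum_iff_general _ B hB k _ hk hkn
end

section
/- (Invariant Decomposition) Let B be a regular bivector in ℝ_{p,q,r} with effective dimension 2k, whose spectrum σ(B) = {±μ₁, …, ±μ_k} consists of 2k pairwise distinct (hence nonzero) eigenvalues, and suppose each outer tangent ta∧(B/μ_j) exists. Then B decomposes as B = Σ_{j=1}^k b_j with b_j := μ_j · ta∧(B/μ_j); the b_j are commuting simple bivectors. -/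
/-! The outer exponential `N = Λ^{-B/μ}` is invertible for the wedge product, and `v ⌋ N = L v ∧ N`
with `L v = -μ⁻¹ (v ⌋ B)`, so that Clifford multiplication by `v` on multiples of `N` becomes
`ω ∧ N ↦ ((v + L v) ∧ ω + v ⌋ ω) ∧ N`. If `1 + L` is bijective then every `ω ∧ N` is reached from
`N`, and `N` has a Clifford inverse; but `N Ñ = 0` at a root `μ` of `P_{2k}`. Hence the roots of
`P_{2k}` are eigenvalues of `v ↦ v ⌋ B`. Eigenvectors `u_j`, `w_j` for `μ_j` and `-μ_j` span
pairwise orthogonal planes; these are nondegenerate because an eigenvector orthogonal to all the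
others would annihilate `W_k`, which is not a zero divisor. Normalizing `u_j · w_j = 1` and removing
the planes one at a time from `B^{∧(k+1)} = 0` leaves `B = Σ μ_j w_j ∧ u_j`. Finally `w_j` and `u_j`
annihilate `Λ^{B/μ_j}` and `Λ^{-B/μ_j}` respectively, so `(w_j ∧ u_j) co∧(B/μ_j) = si∧(B/μ_j)`, that
is, `w_j ∧ u_j = ta∧(B/μ_j)`. -/

namespace GeometricAlgebra

noncomputable section

open CliffordAlgebra TensorProduct
open QuadraticMap (associated)

local infixl:70 " ⌋ " => contractLeft (Q := 0)

local instance (R M : Type*) [CommRing R] [Algebra ℚ R] [AddCommGroup M] [Module R M] :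
    Algebra ℚ (ExteriorAlgebra R M) := Algebra.compHom _ (algebraMap ℚ R)

local instance (K : Type*) [Field K] [CharZero K] : Invertible (2 : K) :=
  invertibleOfNonzero two_ne_zero

section Exterior

variable {R M : Type*} [CommRing R] [AddCommGroup M] [Module R M]

@[elab_as_elim]
theorem exteriorPower_succ_induction {p : ExteriorAlgebra R M → Prop} {i : ℕ}
    {x : ExteriorAlgebra R M} (hx : x ∈ ⋀[R]^(i + 1) M)
    (ι_mul : ∀ (a : M), ∀ y ∈ ⋀[R]^i M, p (ExteriorAlgebra.ι R a * y))
    (add : ∀ x y, p x → p y → p (x + y)) : p x := by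
  rw [ExteriorAlgebra.exteriorPower, pow_succ'] at hx
  refine Submodule.mul_induction_on hx ?_ add
  rintro _ ⟨a, rfl⟩ y hy
  exact ι_mul a y hy

@[elab_as_elim]
theorem exteriorPower_two_induction {p : ExteriorAlgebra R M → Prop} {γ : ExteriorAlgebra R M}
    (hγ : γ ∈ ⋀[R]^2 M)
    (ι_mul_ι : ∀ a b : M, p (ExteriorAlgebra.ι R a * ExteriorAlgebra.ι R b))
    (add : ∀ x y, p x → p y → p (x + y)) : p γ := by
  rw [ExteriorAlgebra.exteriorPower, pow_two] at hγ
  refine Submodule.mul_induction_on hγ ?_ add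
  rintro _ ⟨a, rfl⟩ _ ⟨b, rfl⟩
  exact ι_mul_ι a b

theorem ι_mul_mem_exteriorPower (a : M) {i : ℕ} {x : ExteriorAlgebra R M} (hx : x ∈ ⋀[R]^i M) :
    ExteriorAlgebra.ι R a * x ∈ ⋀[R]^(i + 1) M := by
  rw [ExteriorAlgebra.exteriorPower, pow_succ']
  exact Submodule.mul_mem_mul ⟨a, rfl⟩ hx

theorem ι_mul_ι_mem_exteriorPower (a b : M) :
    ExteriorAlgebra.ι R a * ExteriorAlgebra.ι R b ∈ ⋀[R]^2 M := by
  rw [ExteriorAlgebra.exteriorPower, pow_two]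
  exact Submodule.mul_mem_mul ⟨a, rfl⟩ ⟨b, rfl⟩

theorem pow_mem_exteriorPower {i : ℕ} {x : ExteriorAlgebra R M} (hx : x ∈ ⋀[R]^i M) (m : ℕ) :
    x ^ m ∈ ⋀[R]^(i * m) M := by
  rw [ExteriorAlgebra.exteriorPower, pow_mul]
  exact Submodule.pow_mem_pow _ hx m

theorem ι_mul_ι_swap (a b : M) : ExteriorAlgebra.ι R a * ExteriorAlgebra.ι R b
    = -(ExteriorAlgebra.ι R b * ExteriorAlgebra.ι R a) :=
  eq_neg_of_add_eq_zero_left (ExteriorAlgebra.ι_add_mul_swap a b)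

theorem commute_of_mem_exteriorPower_two {γ : ExteriorAlgebra R M} (hγ : γ ∈ ⋀[R]^2 M)
    (x : ExteriorAlgebra R M) : Commute γ x := by
  induction x using ExteriorAlgebra.induction with
  | algebraMap r => exact Algebra.commute_algebraMap_right r γ
  | ι c =>
    refine exteriorPower_two_induction hγ (fun a b => ?_) fun _ _ hx hy => hx.add_left hy
    rw [commute_iff_eq, mul_assoc, ι_mul_ι_swap b c, mul_neg, ← mul_assoc, ι_mul_ι_swap a c,
      neg_mul, neg_neg, mul_assoc]
  | mul x y hx hy => exact hx.mul_right hy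
  | add x y hx hy => exact hx.add_right hy

theorem contractLeft_ι_mul_ι (d : Module.Dual R M) (a b : M) :
    d ⌋ (ExteriorAlgebra.ι R a * ExteriorAlgebra.ι R b)
      = ExteriorAlgebra.ι R (d a • b - d b • a) := by
  rw [contractLeft_ι_mul, contractLeft_ι, map_sub, map_smul, map_smul, ← Algebra.commutes,
    ← Algebra.smul_def]

theorem ι_ιInv_contractLeft (d : Module.Dual R M) {γ : ExteriorAlgebra R M}
    (hγ : γ ∈ ⋀[R]^2 M) :
    ExteriorAlgebra.ι R (ExteriorAlgebra.ιInv (d ⌋ γ)) = d ⌋ γ := by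
  refine exteriorPower_two_induction hγ (fun a b => ?_) fun x y hx hy => ?_
  · rw [contractLeft_ι_mul_ι, ExteriorAlgebra.ι_leftInverse]
  · simp only [map_add, hx, hy]

theorem contractLeft_mul_of_mem_exteriorPower_two (d : Module.Dual R M)
    {γ : ExteriorAlgebra R M} (hγ : γ ∈ ⋀[R]^2 M) (x : ExteriorAlgebra R M) :
    d ⌋ (γ * x) = (d ⌋ γ) * x + γ * (d ⌋ x) := by
  refine exteriorPower_two_induction hγ (fun a b => ?_) fun y z hy hz => ?_
  · rw [mul_assoc, contractLeft_ι_mul, contractLeft_ι_mul, contractLeft_ι_mul_ι]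
    simp only [map_sub, map_smul, mul_sub, sub_mul, smul_mul_assoc, mul_smul_comm, mul_assoc]
    abel
  · rw [add_mul, map_add, map_add, hy, hz]
    noncomm_ring

theorem contractLeft_pow_succ_of_mem_exteriorPower_two (d : Module.Dual R M)
    {γ : ExteriorAlgebra R M} (hγ : γ ∈ ⋀[R]^2 M) (m : ℕ) :
    d ⌋ (γ ^ (m + 1)) = (m + 1) • ((d ⌋ γ) * γ ^ m) := by
  induction m with
  | zero => simp
  | succ m ih =>
    rw [pow_succ', contractLeft_mul_of_mem_exteriorPower_two d hγ, ih, mul_smul_comm,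
      (commute_of_mem_exteriorPower_two hγ _).left_comm, ← pow_succ', succ_nsmul' _ (m + 1)]

theorem contractLeft_pow_eq_zero (d : Module.Dual R M)
    {γ : ExteriorAlgebra R M} (hγ : γ ∈ ⋀[R]^2 M) (hd : d ⌋ γ = 0) (m : ℕ) :
    d ⌋ (γ ^ m) = 0 := by
  cases m with
  | zero => rw [pow_zero, contractLeft_one]
  | succ m => rw [contractLeft_pow_succ_of_mem_exteriorPower_two d hγ, hd, zero_mul, smul_zero]

theorem contractLeft_of_mem_exteriorPower_zero (d : Module.Dual R M) {x : ExteriorAlgebra R M}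
    (hx : x ∈ ⋀[R]^0 M) : d ⌋ x = 0 := by
  rw [ExteriorAlgebra.exteriorPower, pow_zero, Submodule.mem_one] at hx
  obtain ⟨r, rfl⟩ := hx
  exact contractLeft_algebraMap 0 d r

theorem contractLeft_mem_exteriorPower (d : Module.Dual R M) {i : ℕ} {x : ExteriorAlgebra R M}
    (hx : x ∈ ⋀[R]^(i + 1) M) : d ⌋ x ∈ ⋀[R]^i M := by
  induction i generalizing x with
  | zero =>
    refine exteriorPower_succ_induction hx (fun a y hy => ?_) fun x y hx hy => ?_
    · rw [contractLeft_ι_mul, contractLeft_of_mem_exteriorPower_zero d hy, mul_zero, sub_zero]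
      exact Submodule.smul_mem _ _ hy
    · rw [map_add]
      exact add_mem hx hy
  | succ i ih =>
    refine exteriorPower_succ_induction hx (fun a y hy => ?_) fun x y hx hy => ?_
    · rw [contractLeft_ι_mul]
      exact sub_mem (Submodule.smul_mem _ _ hy) (ι_mul_mem_exteriorPower a (ih hy))
    · rw [map_add]
      exact add_mem hx hy

theorem contractLeft_map {N : Type*} [AddCommGroup N] [Module R N] (d : Module.Dual R N)
    (T : M →ₗ[R] N) (x : ExteriorAlgebra R M) :
    d ⌋ (ExteriorAlgebra.map T x) = ExteriorAlgebra.map T ((d ∘ₗ T) ⌋ x) := by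
  induction x using CliffordAlgebra.left_induction with
  | algebraMap r =>
    rw [AlgHom.commutes, contractLeft_algebraMap, contractLeft_algebraMap, map_zero]
  | add x y hx hy => simp only [map_add, hx, hy]
  | ι_mul x a hx =>
    rw [map_mul (ExteriorAlgebra.map T), ExteriorAlgebra.map_apply_ι, contractLeft_ι_mul, hx,
      contractLeft_ι_mul, map_sub, map_mul, map_smul, ExteriorAlgebra.map_apply_ι,
      LinearMap.comp_apply]

theorem contractLeft_mul_of_contractLeft_eq {d : Module.Dual R M} {w : M}
    {ω : ExteriorAlgebra R M} (h : d ⌋ ω = ExteriorAlgebra.ι R w * ω) (x : ExteriorAlgebra R M) :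
    d ⌋ (x * ω) = (d ⌋ x + ExteriorAlgebra.ι R w * x) * ω := by
  induction x using CliffordAlgebra.left_induction with
  | algebraMap r =>
    rw [contractLeft_algebraMap_mul, h, contractLeft_algebraMap, zero_add, ← mul_assoc,
      Algebra.commutes]
  | add x y hx hy =>
    rw [add_mul, map_add, map_add, hx, hy]
    noncomm_ring
  | ι_mul x a hx =>
    rw [mul_assoc, contractLeft_ι_mul, hx, contractLeft_ι_mul]
    change _ = (_ + ExteriorAlgebra.ι R w * (ExteriorAlgebra.ι R a * x)) * ω
    rw [← mul_assoc (ExteriorAlgebra.ι R w) (ExteriorAlgebra.ι R a), ι_mul_ι_swap w a,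
      ← smul_mul_assoc]
    noncomm_ring

/-- The elements of `⋀ M` of degree less than `m`. Clifford products agree with wedge products
up to such terms of lower degree. -/
def degreeLT (R M : Type*) [CommRing R] [AddCommGroup M] [Module R M] (m : ℕ) :
    Submodule R (ExteriorAlgebra R M) :=
  ⨆ i : Fin m, ⋀[R]^(i : ℕ) M

theorem mem_degreeLT {i m : ℕ} (h : i < m) {x : ExteriorAlgebra R M} (hx : x ∈ ⋀[R]^i M) :
    x ∈ degreeLT R M m :=
  (le_iSup (fun i : Fin m => ⋀[R]^(i : ℕ) M) ⟨i, h⟩) hx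

theorem degreeLT_le {m : ℕ} {S : Submodule R (ExteriorAlgebra R M)} :
    degreeLT R M m ≤ S ↔ ∀ i < m, ⋀[R]^i M ≤ S :=
  iSup_le_iff.trans Fin.forall_iff

theorem degreeLT_mono : Monotone (degreeLT R M) := fun _ _ h =>
  degreeLT_le.2 fun _ hi _ hx => mem_degreeLT (hi.trans_le h) hx

theorem ι_mul_mem_degreeLT (a : M) {m : ℕ} {x : ExteriorAlgebra R M} (hx : x ∈ degreeLT R M m) :
    ExteriorAlgebra.ι R a * x ∈ degreeLT R M (m + 1) := by
  suffices degreeLT R M m ≤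
      (degreeLT R M (m + 1)).comap (LinearMap.mulLeft R (ExteriorAlgebra.ι R a)) from this hx
  exact degreeLT_le.2 fun i hi y hy =>
    mem_degreeLT (Nat.succ_lt_succ hi) (ι_mul_mem_exteriorPower a hy)

theorem contractLeft_mem_degreeLT (d : Module.Dual R M) {m : ℕ} {x : ExteriorAlgebra R M}
    (hx : x ∈ degreeLT R M m) : d ⌋ x ∈ degreeLT R M m := by
  suffices degreeLT R M m ≤ (degreeLT R M m).comap (contractLeft (Q := 0) d) from this hx
  refine degreeLT_le.2 fun i hi y hy => ?_
  rw [Submodule.mem_comap]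
  cases i with
  | zero =>
    rw [contractLeft_of_mem_exteriorPower_zero d hy]
    exact zero_mem _
  | succ i => exact mem_degreeLT (Nat.lt_of_succ_lt hi) (contractLeft_mem_exteriorPower d hy)

theorem mul_mem_degreeLT_of_mem_exteriorPower_two {γ : ExteriorAlgebra R M}
    (hγ : γ ∈ ⋀[R]^2 M) {m : ℕ} {x : ExteriorAlgebra R M} (hx : x ∈ degreeLT R M m) :
    γ * x ∈ degreeLT R M (m + 2) := by
  refine exteriorPower_two_induction hγ (fun a b => ?_) fun y z hy hz => ?_
  · rw [mul_assoc]
    exact ι_mul_mem_degreeLT a (ι_mul_mem_degreeLT b hx)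
  · rw [add_mul]
    exact add_mem hy hz

theorem decompose_eq_zero_of_mem_degreeLT {m l : ℕ} (h : m ≤ l) {x : ExteriorAlgebra R M}
    (hx : x ∈ degreeLT R M m) :
    (DirectSum.decompose (fun n : ℕ => ⋀[R]^n M) x l : ExteriorAlgebra R M) = 0 := by
  suffices degreeLT R M m ≤ LinearMap.ker (GradedAlgebra.proj (fun n : ℕ => ⋀[R]^n M) l)
    from this hx
  refine degreeLT_le.2 fun i hi y hy => ?_
  rw [LinearMap.mem_ker, GradedAlgebra.proj_apply]
  exact DirectSum.decompose_of_mem_ne _ hy (hi.trans_le h).ne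

end Exterior

section ExteriorField

variable {K M : Type*} [Field K] [AddCommGroup M] [Module K M]

theorem eq_zero_of_forall_ι_mul_eq_zero {ι : Type*} {v : ι → M} {s : Finset ι} {i : ℕ}
    {x : ExteriorAlgebra K M} (hv : LinearIndepOn K v (s : Set ι)) (hi : i < s.card)
    (hx : x ∈ ⋀[K]^i M) (h : ∀ a ∈ s, ExteriorAlgebra.ι K (v a) * x = 0) : x = 0 := by
  classical
  induction s using Finset.induction_on generalizing i x with
  | empty => exact absurd hi (Nat.not_lt_zero i)
  | insert a s ha ih =>
    rw [Finset.coe_insert, linearIndepOn_insert (Finset.mem_coe.not.2 ha)] at hv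
    rw [Finset.card_insert_of_notMem ha] at hi
    obtain ⟨d, hda, hds⟩ := Submodule.exists_le_ker_of_notMem hv.2
    have hdx : d ⌋ x = 0 := by
      cases i with
      | zero => exact contractLeft_of_mem_exteriorPower_zero d hx
      | succ i =>
        refine ih hv.1 (Nat.lt_of_succ_lt_succ hi) (contractLeft_mem_exteriorPower d hx)
          fun b hb => ?_
        have hdb : d (v b) = 0 := hds (Submodule.subset_span ⟨b, hb, rfl⟩)
        simpa [hdb, h b (Finset.mem_insert_of_mem hb)] using contractLeft_ι_mul d (v b) x
    have hdax : d (v a) • x = 0 := by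
      simpa [hdx, h a (Finset.mem_insert_self a s)] using (contractLeft_ι_mul d (v a) x).symm
    exact (smul_eq_zero.1 hdax).resolve_left hda

theorem pow_eq_zero_of_finrank_lt [FiniteDimensional K M] {i m : ℕ} {x : ExteriorAlgebra K M}
    (hx : x ∈ ⋀[K]^i M) (h : Module.finrank K M < i * m) : x ^ m = 0 := by
  have hbot : ⋀[K]^(i * m) M = ⊥ := by
    rw [← Submodule.finrank_eq_zero, exteriorPower.finrank_eq, Nat.choose_eq_zero_of_lt h]
  rw [← Submodule.mem_bot K, ← hbot]
  exact pow_mem_exteriorPower hx m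

theorem contractLeft_eq_zero_of_forall_ι_mul_eq_zero {ι : Type*} {v : ι → M} {s : Finset ι}
    {d : Module.Dual K M} {i : ℕ} {x : ExteriorAlgebra K M} (hv : LinearIndepOn K v (s : Set ι))
    (hi : i ≤ s.card) (hx : x ∈ ⋀[K]^i M) (hd : ∀ a ∈ s, d (v a) = 0)
    (h : ∀ a ∈ s, ExteriorAlgebra.ι K (v a) * x = 0) : d ⌋ x = 0 := by
  cases i with
  | zero => exact contractLeft_of_mem_exteriorPower_zero d hx
  | succ i =>
    refine eq_zero_of_forall_ι_mul_eq_zero hv hi (contractLeft_mem_exteriorPower d hx)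
      fun a ha => ?_
    simpa [hd a ha, h a ha] using contractLeft_ι_mul d (v a) x

theorem add_pow_succ_of_mul_self_eq_zero {A : Type*} [Semiring A] {x y : A} (hxy : Commute x y)
    (hx : x * x = 0) (m : ℕ) : (x + y) ^ (m + 1) = y ^ (m + 1) + (m + 1) • (x * y ^ m) := by
  induction m with
  | zero => simp [add_comm]
  | succ m ih =>
    have hx_mul : x * (x * y ^ m) = 0 := by rw [← mul_assoc, hx, zero_mul]
    rw [pow_succ', ih, add_mul, mul_add, mul_add, mul_smul_comm, mul_smul_comm, hx_mul, smul_zero,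
      add_zero, hxy.symm.left_comm, ← pow_succ', ← pow_succ', succ_nsmul _ (m + 1)]
    abel

variable [CharZero K]

theorem pow_eq_zero_of_add_pow_succ_eq_zero {a b : M} {d d' : Module.Dual K M}
    {δ : ExteriorAlgebra K M} {m : ℕ} (hδ : δ ∈ ⋀[K]^2 M) (hd : d ⌋ δ = 0) (hd' : d' ⌋ δ = 0)
    (hdet : d a * d' b - d b * d' a ≠ 0)
    (h : (ExteriorAlgebra.ι K a * ExteriorAlgebra.ι K b + δ) ^ (m + 1) = 0) : δ ^ m = 0 := by
  have hpow (e : Module.Dual K M) (he : e ⌋ δ = 0) (i : ℕ) : e ⌋ (δ ^ i) = 0 :=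
    contractLeft_pow_eq_zero e hδ he i
  have hsq : ExteriorAlgebra.ι K a * ExteriorAlgebra.ι K b *
      (ExteriorAlgebra.ι K a * ExteriorAlgebra.ι K b) = 0 := by
    rw [mul_assoc, ← mul_assoc (ExteriorAlgebra.ι K b), ι_mul_ι_swap b a, neg_mul, mul_neg,
      mul_assoc, ExteriorAlgebra.ι_sq_zero, mul_zero, mul_zero, neg_zero]
  have hcontract : d' ⌋ (d ⌋ (ExteriorAlgebra.ι K a * ExteriorAlgebra.ι K b * δ ^ m))
      = (d a * d' b - d b * d' a) • δ ^ m := by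
    rw [contractLeft_mul_of_mem_exteriorPower_two d (ι_mul_ι_mem_exteriorPower a b), hpow d hd,
      mul_zero, add_zero, contractLeft_ι_mul_ι, contractLeft_ι_mul, hpow d' hd', mul_zero,
      sub_zero, map_sub, map_smul, map_smul, smul_eq_mul, smul_eq_mul]
  rw [add_pow_succ_of_mul_self_eq_zero (commute_of_mem_exteriorPower_two hδ _).symm hsq,
    ← Nat.cast_smul_eq_nsmul K] at h
  have hzero := congrArg (fun z => d' ⌋ (d ⌋ z)) h
  simp only [map_add, map_smul, hpow d hd, map_zero, zero_add, hcontract] at hzero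
  have hscaled := (smul_eq_zero.1 hzero).resolve_left (Nat.cast_ne_zero.2 m.succ_ne_zero)
  exact (smul_eq_zero.1 hscaled).resolve_left hdet

end ExteriorField

section Exponential

variable {R M : Type*} [CommRing R] [Algebra ℚ R] [AddCommGroup M] [Module R M]

theorem contractLeft_exp (d : Module.Dual R M) {γ : ExteriorAlgebra R M}
    (hγ : γ ∈ ⋀[R]^2 M) (hnil : IsNilpotent γ) :
    d ⌋ (IsNilpotent.exp γ) = (d ⌋ γ) * IsNilpotent.exp γ := by
  obtain ⟨n, hn⟩ := hnil
  have hn' : γ ^ (n + 1) = 0 := by rw [pow_succ, hn, zero_mul]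
  conv_rhs => rw [IsNilpotent.exp_eq_sum hn]
  rw [IsNilpotent.exp_eq_sum hn', Finset.sum_range_succ', pow_zero, map_add,
    map_rat_smul, contractLeft_one, smul_zero, add_zero, map_sum, Finset.mul_sum]
  refine Finset.sum_congr rfl fun j _ => ?_
  have hfactorial : ((j + 1).factorial : ℚ)⁻¹ * (j + 1 : ℕ) = (j.factorial : ℚ)⁻¹ := by
    rw [Nat.factorial_succ, Nat.cast_mul, mul_inv_rev, inv_mul_cancel_right₀]
    exact Nat.cast_ne_zero.2 j.succ_ne_zero
  rw [map_rat_smul, contractLeft_pow_succ_of_mem_exteriorPower_two d hγ,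
    ← Nat.cast_smul_eq_nsmul ℚ, smul_smul, hfactorial, mul_smul_comm]

end Exponential

section Clifford

variable {R M : Type*} [CommRing R] [Invertible (2 : R)] [AddCommGroup M] [Module R M]
variable (Q : QuadraticForm R M)

theorem equivExterior_ι_mul (v : M) (x : CliffordAlgebra Q) :
    equivExterior Q (ι Q v * x)
      = ExteriorAlgebra.ι R v * equivExterior Q x + associated Q v ⌋ (equivExterior Q x) := by
  have hneg (y : ExteriorAlgebra R M) : associated (-Q) v ⌋ y = -(associated Q v ⌋ y) := by
    simp only [map_neg, LinearMap.neg_apply]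
  refine (changeForm_ι_mul (changeForm.associated_neg_proof (Q := Q)) v x).trans ?_
  exact (congrArg _ (hneg _)).trans (sub_neg_eq_add _ _)

theorem equivExterior_ι (v : M) : equivExterior Q (ι Q v) = ExteriorAlgebra.ι R v :=
  changeForm_ι changeForm.associated_neg_proof v

theorem equivExterior_algebraMap (r : R) :
    equivExterior Q (algebraMap R _ r) = algebraMap R _ r :=
  changeForm_algebraMap changeForm.associated_neg_proof r

theorem equivExterior_one : equivExterior Q 1 = 1 :=
  changeForm_one changeForm.associated_neg_proof

theorem ι_mul_ι_add_swap_associated (v w : M) :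
    ι Q v * ι Q w + ι Q w * ι Q v = algebraMap R _ (2 * associated Q v w) := by
  rw [ι_mul_ι_add_swap, ← QuadraticMap.polarBilin_apply_apply,
    ← QuadraticMap.two_nsmul_associated R Q, LinearMap.smul_apply, LinearMap.smul_apply,
    nsmul_eq_mul, Nat.cast_ofNat]

/-- The outer product `v ∧ w = v w - v · w` of two vectors, as an element of the Clifford
algebra. -/
def vectorWedge (v w : M) : CliffordAlgebra Q :=
  ι Q v * ι Q w - algebraMap R _ (associated Q v w)

theorem equivExterior_vectorWedge (v w : M) :
    equivExterior Q (vectorWedge Q v w) = ExteriorAlgebra.ι R v * ExteriorAlgebra.ι R w := by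
  rw [vectorWedge, map_sub, equivExterior_ι_mul, equivExterior_ι, equivExterior_algebraMap,
    contractLeft_ι, add_sub_cancel_right]

variable {Q}

@[elab_as_elim]
theorem bivector_induction {p : CliffordAlgebra Q → Prop} {B : CliffordAlgebra Q}
    (hB : equivExterior Q B ∈ ⋀[R]^2 M) (vectorWedge : ∀ v w, p (vectorWedge Q v w))
    (add : ∀ x y, p x → p y → p (x + y)) : p B := by
  rw [← (equivExterior Q).symm_apply_apply B]
  refine exteriorPower_two_induction hB (fun v w => ?_) fun x y hx hy => ?_
  · rw [← equivExterior_vectorWedge Q, LinearEquiv.symm_apply_apply]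
    exact vectorWedge v w
  · rw [map_add]
    exact add _ _ hx hy

theorem equivExterior_bivector_mul_sub_mem {B x : CliffordAlgebra Q} {m : ℕ}
    (hB : equivExterior Q B ∈ ⋀[R]^2 M) (hx : equivExterior Q x ∈ degreeLT R M (m + 1)) :
    equivExterior Q (B * x) - equivExterior Q B * equivExterior Q x ∈ degreeLT R M (m + 2) := by
  refine bivector_induction hB (fun v w => ?_) fun y z hy hz => ?_
  · have hwx := contractLeft_mem_degreeLT (associated Q w) hx
    have hexpand : equivExterior Q (vectorWedge Q v w * x)
        - equivExterior Q (vectorWedge Q v w) * equivExterior Q x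
        = ExteriorAlgebra.ι R v * (associated Q w ⌋ (equivExterior Q x))
          + associated Q v ⌋ (ExteriorAlgebra.ι R w * equivExterior Q x)
          + associated Q v ⌋ (associated Q w ⌋ (equivExterior Q x))
          - associated Q v w • equivExterior Q x := by
      rw [equivExterior_vectorWedge, vectorWedge, sub_mul, map_sub, mul_assoc,
        equivExterior_ι_mul, equivExterior_ι_mul, ← Algebra.smul_def, map_smul, map_add]
      noncomm_ring
    rw [hexpand]
    refine sub_mem (add_mem (add_mem ?_ ?_) ?_) ?_
    · exact ι_mul_mem_degreeLT v hwx
    · exact contractLeft_mem_degreeLT _ (ι_mul_mem_degreeLT w hx)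
    · exact degreeLT_mono (Nat.le_succ _) (contractLeft_mem_degreeLT _ hwx)
    · exact degreeLT_mono (Nat.le_succ _) (Submodule.smul_mem _ _ hx)
  · rw [map_add, add_mul, add_mul, map_add, add_sub_add_comm]
    exact add_mem hy hz

theorem equivExterior_bivector_pow_sub_mem {B : CliffordAlgebra Q}
    (hB : equivExterior Q B ∈ ⋀[R]^2 M) (j : ℕ) :
    equivExterior Q (B ^ j) - equivExterior Q B ^ j ∈ degreeLT R M (2 * j) := by
  induction j with
  | zero => simp only [pow_zero, equivExterior_one, sub_self, zero_mem]
  | succ j ih =>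
    have hpow : equivExterior Q (B ^ j) ∈ degreeLT R M (2 * j + 1) := by
      simpa only [sub_add_cancel] using add_mem (degreeLT_mono (Nat.le_succ _) ih)
        (mem_degreeLT (Nat.lt_succ_self _) (pow_mem_exteriorPower hB j))
    rw [pow_succ', pow_succ', ← sub_add_sub_cancel _ (equivExterior Q B * _), ← mul_sub]
    exact add_mem (equivExterior_bivector_mul_sub_mem hB hpow)
      (mul_mem_degreeLT_of_mem_exteriorPower_two hB ih)

theorem vectorWedge_mul_self (v w : M) : vectorWedge Q v w * vectorWedge Q v w
    = algebraMap R _ (associated Q v w ^ 2 - Q v * Q w) := by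
  have hswap : ι Q w * ι Q v = algebraMap R _ (2 * associated Q v w) - ι Q v * ι Q w :=
    eq_sub_of_add_eq' (ι_mul_ι_add_swap_associated Q v w)
  have hsq : ι Q v * ι Q w * (ι Q v * ι Q w)
      = (2 * associated Q v w) • (ι Q v * ι Q w) - algebraMap R _ (Q v * Q w) := by
    rw [mul_assoc, ← mul_assoc (ι Q w), hswap, sub_mul, mul_sub, mul_assoc (ι Q v) (ι Q w),
      ι_sq_scalar, ← mul_assoc (ι Q v) (ι Q v), ι_sq_scalar, ← Algebra.smul_def, mul_smul_comm,
      ← map_mul (algebraMap R (CliffordAlgebra Q))]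
  rw [vectorWedge, sub_mul, mul_sub, mul_sub, hsq, ← Algebra.commutes, ← Algebra.smul_def,
    ← map_mul (algebraMap R (CliffordAlgebra Q)), map_sub, two_mul, add_smul, pow_two]
  abel

theorem commute_vectorWedge {v w v' w' : M} (hvv : associated Q v v' = 0)
    (hvw : associated Q v w' = 0) (hwv : associated Q w v' = 0) (hww : associated Q w w' = 0) :
    Commute (vectorWedge Q v w) (vectorWedge Q v' w') := by
  have hanti {a b : M} (h : associated Q a b = 0) : ι Q a * ι Q b = -(ι Q b * ι Q a) := by
    refine eq_neg_of_add_eq_zero_left ?_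
    rw [ι_mul_ι_add_swap_associated, h, mul_zero, map_zero]
  have hcomm {z : M} (hv : associated Q v z = 0) (hw : associated Q w z = 0) :
      Commute (ι Q v * ι Q w) (ι Q z) := by
    rw [commute_iff_eq, mul_assoc, hanti hw, mul_neg, ← mul_assoc, hanti hv, neg_mul, neg_neg,
      mul_assoc]
  refine Commute.sub_left (Commute.sub_right ?_ ?_) (Algebra.commute_algebraMap_left _ _)
  · exact (hcomm hvv hwv).mul_right (hcomm hvw hww)
  · exact Algebra.commute_algebraMap_right _ _

theorem vectorWedge_mul_of_right {v w : M} {x : CliffordAlgebra Q} (h : ι Q w * x = 0) :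
    vectorWedge Q v w * x = -(associated Q v w • x) := by
  rw [vectorWedge, sub_mul, mul_assoc, h, mul_zero, zero_sub, ← Algebra.smul_def]

theorem vectorWedge_mul_of_left {v w : M} {x : CliffordAlgebra Q} (h : ι Q v * x = 0) :
    vectorWedge Q v w * x = associated Q v w • x := by
  have hswap : vectorWedge Q v w = algebraMap R _ (associated Q v w) - ι Q w * ι Q v := by
    rw [vectorWedge, eq_sub_of_add_eq (ι_mul_ι_add_swap_associated Q v w), two_mul, map_add]
    abel
  rw [hswap, sub_mul, mul_assoc, h, mul_zero, sub_zero, ← Algebra.smul_def]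

end Clifford
section Twist

variable {R M : Type*} [CommRing R] [Invertible (2 : R)] [AddCommGroup M] [Module R M]
variable {Q : QuadraticForm R M}

theorem toQuadraticMap_neg_compl₂_one_add {L : Module.End R M}
    (hL : ∀ v, associated Q v (L v) = 0) :
    LinearMap.BilinMap.toQuadraticMap (-(associated Q).compl₂ (1 + L)) = 0 - Q := by
  ext v
  simp [hL, QuadraticMap.associated_eq_self_apply R Q]

/-- For `L` with `v · L v = 0`, the linear map `ψ : Cl Q → ⋀ M` with `ψ 1 = 1` in which left
multiplication by a vector `v` becomes `x ↦ (v + L v) ∧ x + v ⌋ x`. For `L = 0` this is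
`CliffordAlgebra.equivExterior`. -/
def twistedExterior (L : Module.End R M) (hL : ∀ v, associated Q v (L v) = 0) :
    CliffordAlgebra Q →ₗ[R] ExteriorAlgebra R M :=
  (ExteriorAlgebra.map (1 + L)).toLinearMap ∘ₗ
    (changeFormEquiv (toQuadraticMap_neg_compl₂_one_add hL)).toLinearMap

theorem twistedExterior_algebraMap (L : Module.End R M) (hL : ∀ v, associated Q v (L v) = 0)
    (r : R) : twistedExterior L hL (algebraMap R _ r) = algebraMap R _ r :=
  (congrArg _ (changeForm_algebraMap (toQuadraticMap_neg_compl₂_one_add hL) r)).trans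
    (AlgHom.commutes _ r)

theorem twistedExterior_ι_mul (L : Module.End R M) (hL : ∀ v, associated Q v (L v) = 0)
    (v : M) (x : CliffordAlgebra Q) : twistedExterior L hL (ι Q v * x)
      = ExteriorAlgebra.ι R (v + L v) * twistedExterior L hL x
        + associated Q v ⌋ (twistedExterior L hL x) := by
  have hC : (-(associated Q).compl₂ (1 + L)) v = -(associated Q v ∘ₗ (1 + L)) := rfl
  refine (congrArg (ExteriorAlgebra.map (1 + L))
    (changeForm_ι_mul (toQuadraticMap_neg_compl₂_one_add hL) v x)).trans ?_
  rw [map_sub, map_mul]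
  refine (congrArg₂ _ (congrArg₂ _ (ExteriorAlgebra.map_apply_ι _ v) rfl)
    (congrArg _ (DFunLike.congr_fun (congrArg _ hC) _))).trans ?_
  rw [map_neg, LinearMap.neg_apply, map_neg, sub_neg_eq_add, ← contractLeft_map]
  rfl

theorem twistedExterior_surjective {L : Module.End R M} (hL : ∀ v, associated Q v (L v) = 0)
    (hsurj : Function.Surjective (1 + L : Module.End R M)) :
    Function.Surjective (twistedExterior L hL) :=
  (ExteriorAlgebra.map_surjective_iff.2 hsurj).comp (LinearEquiv.surjective _)

theorem equivExterior_mul_eq_twistedExterior_mul {L : Module.End R M}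
    (hL : ∀ v, associated Q v (L v) = 0) {N : CliffordAlgebra Q}
    (hN : ∀ v, associated Q v ⌋ (equivExterior Q N)
      = ExteriorAlgebra.ι R (L v) * equivExterior Q N) (x : CliffordAlgebra Q) :
    equivExterior Q (x * N) = twistedExterior L hL x * equivExterior Q N := by
  induction x using CliffordAlgebra.left_induction with
  | algebraMap r =>
    rw [twistedExterior_algebraMap, ← Algebra.smul_def, ← Algebra.smul_def, map_smul]
  | add x y hx hy => rw [add_mul, map_add, map_add, add_mul, hx, hy]
  | ι_mul x v hx =>
    rw [mul_assoc, equivExterior_ι_mul, hx, contractLeft_mul_of_contractLeft_eq (hN v),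
      twistedExterior_ι_mul, map_add]
    noncomm_ring

theorem exists_mul_eq_one_of_isUnit_equivExterior {L : Module.End R M}
    (hL : ∀ v, associated Q v (L v) = 0) (hsurj : Function.Surjective (1 + L : Module.End R M))
    {N : CliffordAlgebra Q} (hunit : IsUnit (equivExterior Q N))
    (hN : ∀ v, associated Q v ⌋ (equivExterior Q N)
      = ExteriorAlgebra.ι R (L v) * equivExterior Q N) : ∃ y, y * N = 1 := by
  obtain ⟨ω, hω⟩ := hunit.exists_left_inv
  obtain ⟨y, rfl⟩ := twistedExterior_surjective hL hsurj ω
  refine ⟨y, (equivExterior Q).injective ?_⟩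
  rw [equivExterior_mul_eq_twistedExterior_mul hL hN, hω, equivExterior_one]

/-- The endomorphism `v ↦ v ⌋ B` of vectors attached to a bivector `B`; up to sign it is
`v ↦ B × v`, so that its eigenvectors are those of `B`. -/
def vectorContraction (B : CliffordAlgebra Q) : Module.End R M :=
  ExteriorAlgebra.ιInv ∘ₗ (contractLeft (Q := 0)).flip (equivExterior Q B) ∘ₗ associated Q

variable {B : CliffordAlgebra Q}

theorem ι_vectorContraction (hB : equivExterior Q B ∈ ⋀[R]^2 M) (v : M) :
    ExteriorAlgebra.ι R (vectorContraction B v) = associated Q v ⌋ (equivExterior Q B) :=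
  ι_ιInv_contractLeft (associated Q v) hB

theorem vectorContraction_smul (c : R) (B : CliffordAlgebra Q) :
    vectorContraction (c • B) = c • vectorContraction B := by
  rw [vectorContraction, map_smul, map_smul, LinearMap.smul_comp, LinearMap.comp_smul,
    vectorContraction]

theorem associated_vectorContraction (hB : equivExterior Q B ∈ ⋀[R]^2 M) (x y : M) :
    associated Q x (vectorContraction B y) = -associated Q y (vectorContraction B x) := by
  have h := contractLeft_comm (Q := 0) (associated Q x) (associated Q y) (equivExterior Q B)
  rw [← ι_vectorContraction hB, ← ι_vectorContraction hB] at h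
  refine (ExteriorAlgebra.algebraMap_leftInverse M).injective ?_
  rw [map_neg]
  exact (contractLeft_ι 0 _ _).symm.trans (h.trans (congrArg _ (contractLeft_ι 0 _ _)))

theorem associated_vectorContraction_self (hB : equivExterior Q B ∈ ⋀[R]^2 M) (v : M) :
    associated Q v (vectorContraction B v) = 0 := by
  have h := eq_neg_iff_add_eq_zero.1 (associated_vectorContraction hB v v)
  rwa [← two_mul, isUnit_of_invertible (2 : R) |>.mul_right_eq_zero] at h

theorem associated_eq_zero_of_vectorContraction_eq_smul [IsDomain R]
    (hB : equivExterior Q B ∈ ⋀[R]^2 M) {x y : M} {a b : R}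
    (hx : vectorContraction B x = a • x) (hy : vectorContraction B y = b • y) (hab : a + b ≠ 0) :
    associated Q x y = 0 := by
  have h := associated_vectorContraction hB x y
  rw [hx, hy, map_smul, map_smul, QuadraticMap.associated_isSymm R Q y] at h
  refine (mul_eq_zero.1 ?_).resolve_left hab
  simp only [smul_eq_mul] at h
  linear_combination h

end Twist
section OuterExponential

variable {K M : Type*} [Field K] [CharZero K] [AddCommGroup M] [Module K M]
variable {Q : QuadraticForm K M} {B : CliffordAlgebra Q}

theorem isGrade_iff {l : ℕ} {x : CliffordAlgebra Q} :
    IsGrade Q l x ↔ equivExterior Q x ∈ ⋀[K]^l M := by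
  refine (LinearEquiv.symm_apply_eq _).trans ⟨fun h => ?_, fun h => ?_⟩
  · exact h ▸ SetLike.coe_mem _
  · exact DirectSum.decompose_of_mem_same _ h

theorem equivExterior_Wj (hB : equivExterior Q B ∈ ⋀[K]^2 M) (j : ℕ) :
    equivExterior Q (Wj Q B j) = (j.factorial : K)⁻¹ • equivExterior Q B ^ j := by
  rw [Wj, map_smul]
  refine congrArg _ (((equivExterior Q).apply_symm_apply _).trans ?_)
  rw [← sub_add_cancel (equivExterior Q (B ^ j)) (equivExterior Q B ^ j), DirectSum.decompose_add,
    DirectSum.add_apply, Submodule.coe_add, decompose_eq_zero_of_mem_degreeLT le_rfl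
      (equivExterior_bivector_pow_sub_mem hB j), zero_add,
    DirectSum.decompose_of_mem_same (fun n : ℕ => ⋀[K]^n M) (pow_mem_exteriorPower hB j)]

theorem Wj_eq_zero_iff (hB : equivExterior Q B ∈ ⋀[K]^2 M) (j : ℕ) :
    Wj Q B j = 0 ↔ equivExterior Q B ^ j = 0 := by
  rw [← (equivExterior Q).map_eq_zero_iff, equivExterior_Wj hB, smul_eq_zero_iff_right]
  exact inv_ne_zero (Nat.cast_ne_zero.2 j.factorial_ne_zero)

theorem Wj_eq_zero_of_finrank_lt [FiniteDimensional K M] (hB : equivExterior Q B ∈ ⋀[K]^2 M)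
    {j : ℕ} (h : Module.finrank K M < 2 * j) : Wj Q B j = 0 :=
  (Wj_eq_zero_iff hB j).2 (pow_eq_zero_of_finrank_lt hB h)

theorem Wj_smul (c : K) (j : ℕ) : Wj Q (c • B) j = c ^ j • Wj Q B j := by
  simp only [Wj, gradeProj, smul_pow, map_smul, DirectSum.decompose_smul, DirectSum.smul_apply,
    Submodule.coe_smul, smul_comm (c ^ j)]

theorem equivExterior_outerExp (hB : equivExterior Q B ∈ ⋀[K]^2 M) {n : ℕ}
    (hn : equivExterior Q B ^ (n + 1) = 0) :
    equivExterior Q (outerExp Q n B) = IsNilpotent.exp (equivExterior Q B) := by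
  rw [outerExp, map_sum, IsNilpotent.exp_eq_sum hn]
  refine Finset.sum_congr rfl fun j _ => ?_
  rw [equivExterior_Wj hB, ← algebraMap_smul K (j.factorial : ℚ)⁻¹, map_inv₀, map_natCast]

theorem contractLeft_outerExp (hB : equivExterior Q B ∈ ⋀[K]^2 M) {n : ℕ}
    (hn : equivExterior Q B ^ (n + 1) = 0) (v : M) :
    associated Q v ⌋ (equivExterior Q (outerExp Q n B))
      = ExteriorAlgebra.ι K (vectorContraction B v) * equivExterior Q (outerExp Q n B) := by
  rw [equivExterior_outerExp hB hn, contractLeft_exp _ hB ⟨_, hn⟩, ι_vectorContraction hB]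

theorem ι_mul_outerExp_eq_zero (hB : equivExterior Q B ∈ ⋀[K]^2 M) {n : ℕ}
    (hn : equivExterior Q B ^ (n + 1) = 0) {v : M} (hv : vectorContraction B v = -v) :
    ι Q v * outerExp Q n B = 0 := by
  refine (equivExterior Q).map_eq_zero_iff.1 ?_
  rw [equivExterior_ι_mul, contractLeft_outerExp hB hn, hv, map_neg, neg_mul, add_neg_cancel]

theorem Mpoly_zero (k : ℕ) : Mpoly Q B k 0 = Wj Q B k := by
  rw [Mpoly, Finset.sum_range_succ, Finset.sum_eq_zero fun j hj => ?_, zero_add, Nat.sub_self,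
    pow_zero, one_smul]
  rw [neg_zero, zero_pow (Nat.sub_ne_zero_of_lt (Finset.mem_range.1 hj)), zero_smul]

theorem Mpoly_eq_smul_outerExp (k : ℕ) {μ : K} (hμ : μ ≠ 0) :
    Mpoly Q B k μ = (-μ) ^ k • outerExp Q k ((-μ)⁻¹ • B) := by
  rw [Mpoly, outerExp, Finset.smul_sum]
  refine Finset.sum_congr rfl fun j hj => ?_
  rw [Wj_smul, smul_smul, inv_pow,
    pow_sub₀ _ (neg_ne_zero.2 hμ) (Nat.lt_succ_iff.1 (Finset.mem_range.1 hj))]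

theorem surjective_one_add_vectorContraction [FiniteDimensional K M] {μ : K} (hμ : μ ≠ 0)
    (h : ¬(vectorContraction B).HasEigenvalue μ) :
    Function.Surjective (1 + vectorContraction ((-μ)⁻¹ • B) : Module.End K M) := by
  rw [Module.End.hasEigenvalue_iff_mem_spectrum, spectrum.notMem_iff] at h
  have hsmul : 1 + vectorContraction ((-μ)⁻¹ • B)
      = μ⁻¹ • (algebraMap K _ μ - vectorContraction B) := by
    rw [vectorContraction_smul, smul_sub, Algebra.algebraMap_eq_smul_one, smul_smul,
      inv_mul_cancel₀ hμ, one_smul, inv_neg, neg_smul, sub_eq_add_neg]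
  rw [hsmul]
  exact ((Module.End.isUnit_iff _).1 (h.smul (Units.mk0 _ (inv_ne_zero hμ)))).surjective

theorem hasEigenvalue_vectorContraction [FiniteDimensional K M]
    (hB : equivExterior Q B ∈ ⋀[K]^2 M) {k : ℕ} (hk : equivExterior Q B ^ (k + 1) = 0) {μ : K}
    (hμ : μ ≠ 0) (h : Mpoly Q B k μ * reverse (Mpoly Q B k μ) = 0) :
    (vectorContraction B).HasEigenvalue μ := by
  have hB' : equivExterior Q ((-μ)⁻¹ • B) ∈ ⋀[K]^2 M := by
    rw [map_smul]
    exact Submodule.smul_mem _ _ hB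
  have hk' : equivExterior Q ((-μ)⁻¹ • B) ^ (k + 1) = 0 := by
    rw [map_smul, smul_pow, hk, smul_zero]
  have hunit : IsUnit (equivExterior Q (outerExp Q k ((-μ)⁻¹ • B))) := by
    rw [equivExterior_outerExp hB' hk']
    exact IsNilpotent.isUnit_exp ⟨_, hk'⟩
  rw [Mpoly_eq_smul_outerExp k hμ] at h
  set N := outerExp Q k ((-μ)⁻¹ • B)
  by_contra hμL
  obtain ⟨y, hy⟩ := exists_mul_eq_one_of_isUnit_equivExterior
    (associated_vectorContraction_self hB') (surjective_one_add_vectorContraction hμ hμL) hunit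
    (contractLeft_outerExp hB' hk')
  have hreverse : reverse N = 0 := by
    rw [map_smul, smul_mul_smul_comm,
      smul_eq_zero_iff_right (mul_self_ne_zero.2 (pow_ne_zero k (neg_ne_zero.2 hμ)))] at h
    rw [← one_mul (reverse N), ← hy, mul_assoc, h, mul_zero]
  have hN : N = 0 := by rw [← reverse_reverse N, hreverse, map_zero]
  rw [hN, map_zero] at hunit
  exact not_isUnit_zero hunit

end OuterExponential
section Frame

/-- The bases `u i`, `w i` of pairwise orthogonal hyperbolic planes, with `u i · w i = 1`. -/
structure IsHyperbolicFrame {R M ι : Type*} [CommRing R] [Invertible (2 : R)] [AddCommGroup M]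
    [Module R M] (Q : QuadraticForm R M) (u w : ι → M) : Prop where
  left_left (i j : ι) : associated Q (u i) (u j) = 0
  right_right (i j : ι) : associated Q (w i) (w j) = 0
  left_right_self (i : ι) : associated Q (u i) (w i) = 1
  left_right_of_ne {i j : ι} (h : i ≠ j) : associated Q (u i) (w j) = 0

namespace IsHyperbolicFrame

variable {R M ι : Type*} [CommRing R] [Invertible (2 : R)] [AddCommGroup M] [Module R M]
variable {Q : QuadraticForm R M} {u w : ι → M}

theorem left_right [DecidableEq ι] (h : IsHyperbolicFrame Q u w) (i j : ι) :
    associated Q (u i) (w j) = if i = j then 1 else 0 := by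
  split_ifs with hij
  · rw [hij, h.left_right_self]
  · exact h.left_right_of_ne hij

theorem right_left [DecidableEq ι] (h : IsHyperbolicFrame Q u w) (i j : ι) :
    associated Q (w i) (u j) = if i = j then 1 else 0 := by
  rw [QuadraticMap.associated_isSymm R, h.left_right]
  exact if_congr eq_comm rfl rfl

theorem commute_vectorWedge (h : IsHyperbolicFrame Q u w) (i j : ι) :
    Commute (vectorWedge Q (w i) (u i)) (vectorWedge Q (w j) (u j)) := by
  classical
  obtain rfl | hij := eq_or_ne i j
  · exact Commute.refl _
  · refine GeometricAlgebra.commute_vectorWedge (h.right_right i j) ?_ ?_ (h.left_left i j)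
    · rw [h.right_left, if_neg hij]
    · rw [h.left_right, if_neg hij]

theorem vectorWedge_mul_self (h : IsHyperbolicFrame Q u w) (i : ι) :
    vectorWedge Q (w i) (u i) * vectorWedge Q (w i) (u i) = 1 := by
  classical
  rw [GeometricAlgebra.vectorWedge_mul_self, h.right_left, if_pos rfl,
    ← QuadraticMap.associated_eq_self_apply R Q (w i), h.right_right, zero_mul, sub_zero, one_pow,
    map_one]

theorem contractLeft_left [DecidableEq ι] (h : IsHyperbolicFrame Q u w) (i j : ι) :
    associated Q (u i) ⌋ (ExteriorAlgebra.ι R (w j) * ExteriorAlgebra.ι R (u j))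
      = if i = j then ExteriorAlgebra.ι R (u j) else 0 := by
  rw [contractLeft_ι_mul_ι, h.left_right, h.left_left, zero_smul, sub_zero]
  split_ifs <;> simp only [one_smul, zero_smul, map_zero]

theorem contractLeft_right [DecidableEq ι] (h : IsHyperbolicFrame Q u w) (i j : ι) :
    associated Q (w i) ⌋ (ExteriorAlgebra.ι R (w j) * ExteriorAlgebra.ι R (u j))
      = if i = j then -ExteriorAlgebra.ι R (w j) else 0 := by
  rw [contractLeft_ι_mul_ι, h.right_left, h.right_right, zero_smul, zero_sub]
  split_ifs <;> simp only [one_smul, zero_smul, map_zero, map_neg, neg_zero]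

variable {B : CliffordAlgebra Q} {μ : ι → R}

theorem contractLeft_left_sub_sum (h : IsHyperbolicFrame Q u w)
    (hB : equivExterior Q B ∈ ⋀[R]^2 M) {i : ι} (hu : vectorContraction B (u i) = μ i • u i)
    {s : Finset ι} (hi : i ∈ s) :
    associated Q (u i) ⌋ (equivExterior Q B
      - ∑ j ∈ s, μ j • (ExteriorAlgebra.ι R (w j) * ExteriorAlgebra.ι R (u j))) = 0 := by
  classical
  simp only [map_sub, map_sum, map_smul, h.contractLeft_left, smul_ite, smul_zero]
  rw [Finset.sum_ite_eq, if_pos hi, ← ι_vectorContraction hB, hu, map_smul, sub_self]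

theorem contractLeft_right_sub_sum (h : IsHyperbolicFrame Q u w)
    (hB : equivExterior Q B ∈ ⋀[R]^2 M) {i : ι} (hw : vectorContraction B (w i) = -μ i • w i)
    {s : Finset ι} (hi : i ∈ s) :
    associated Q (w i) ⌋ (equivExterior Q B
      - ∑ j ∈ s, μ j • (ExteriorAlgebra.ι R (w j) * ExteriorAlgebra.ι R (u j))) = 0 := by
  classical
  simp only [map_sub, map_sum, map_smul, h.contractLeft_right, smul_ite, smul_zero]
  rw [Finset.sum_ite_eq, if_pos hi, ← ι_vectorContraction hB, hw, map_smul, neg_smul, smul_neg,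
    sub_self]

end IsHyperbolicFrame

variable {K M : Type*} [Field K] [CharZero K] [AddCommGroup M] [Module K M]
variable {Q : QuadraticForm K M} {B : CliffordAlgebra Q}

namespace IsHyperbolicFrame

variable {ι : Type*} {u w : ι → M} {μ : ι → K}

-- Each step peels off one plane and lowers the nilpotency index by one.
theorem sub_sum_pow_eq_zero (h : IsHyperbolicFrame Q u w)
    (hB : equivExterior Q B ∈ ⋀[K]^2 M) (hμ : ∀ i, μ i ≠ 0)
    (hu : ∀ i, vectorContraction B (u i) = μ i • u i)
    (hw : ∀ i, vectorContraction B (w i) = -μ i • w i) (s : Finset ι) {m : ℕ}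
    (hm : equivExterior Q B ^ (m + s.card) = 0) :
    (equivExterior Q B
      - ∑ j ∈ s, μ j • (ExteriorAlgebra.ι K (w j) * ExteriorAlgebra.ι K (u j))) ^ m = 0 := by
  classical
  induction s using Finset.induction_on generalizing m with
  | empty => rwa [Finset.sum_empty, sub_zero]
  | insert i s hi ih =>
    rw [Finset.card_insert_of_notMem hi, add_comm s.card, ← add_assoc] at hm
    have hmem := Finset.mem_insert_self i s
    refine pow_eq_zero_of_add_pow_succ_eq_zero (a := μ i • w i) (b := u i) (sub_mem hB (sum_mem
      fun j _ => Submodule.smul_mem _ _ (ι_mul_ι_mem_exteriorPower _ _)))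
      (h.contractLeft_left_sub_sum hB (hu i) hmem) (h.contractLeft_right_sub_sum hB (hw i) hmem)
      ?_ ?_
    · simpa [h.left_right, h.left_left, h.right_left] using hμ i
    · rw [Finset.sum_insert hi, map_smul, smul_mul_assoc, add_sub,
        add_sub_add_left_eq_sub]
      exact ih hm

theorem eq_sum_vectorWedge [Fintype ι] (h : IsHyperbolicFrame Q u w)
    (hB : equivExterior Q B ∈ ⋀[K]^2 M) (hμ : ∀ i, μ i ≠ 0)
    (hu : ∀ i, vectorContraction B (u i) = μ i • u i)
    (hw : ∀ i, vectorContraction B (w i) = -μ i • w i)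
    (hpow : equivExterior Q B ^ (Fintype.card ι + 1) = 0) :
    B = ∑ i, μ i • vectorWedge Q (w i) (u i) := by
  have hzero := h.sub_sum_pow_eq_zero hB hμ hu hw Finset.univ (m := 1)
    (by rwa [Finset.card_univ, add_comm])
  refine (equivExterior Q).injective ?_
  rw [pow_one, sub_eq_zero] at hzero
  simp only [map_sum, map_smul, equivExterior_vectorWedge, hzero]

end IsHyperbolicFrame

theorem ι_mul_pow_eq_zero_of_vectorContraction_eq_smul (hB : equivExterior Q B ∈ ⋀[K]^2 M) {k : ℕ}
    (hk : equivExterior Q B ^ (k + 1) = 0) {v : M} {c : K} (hc : c ≠ 0)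
    (hv : vectorContraction B v = c • v) :
    ExteriorAlgebra.ι K v * equivExterior Q B ^ k = 0 := by
  have h := contractLeft_pow_succ_of_mem_exteriorPower_two (associated Q v) hB k
  rw [hk, map_zero, ← ι_vectorContraction hB, hv, map_smul, smul_mul_assoc,
    ← Nat.cast_smul_eq_nsmul K, smul_smul, eq_comm] at h
  exact (smul_eq_zero.1 h).resolve_left (mul_ne_zero (Nat.cast_ne_zero.2 k.succ_ne_zero) hc)

theorem exists_associated_ne_zero_of_hasEigenvector {σ : Type*} [Fintype σ]
    (hB : equivExterior Q B ∈ ⋀[K]^2 M) {k : ℕ} (hk : equivExterior Q B ^ (k + 1) = 0)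
    (hreg : IsRightRegular (Wj Q B k)) (hσ : 2 * k ≤ Fintype.card σ) {e : σ → M} {c : σ → K}
    (hc : Function.Injective c) (hc0 : ∀ s, c s ≠ 0)
    (he : ∀ s, (vectorContraction B).HasEigenvector (c s) (e s)) (s : σ) :
    ∃ t, associated Q (e s) (e t) ≠ 0 := by
  by_contra! horth
  have hkill (t : σ) : ExteriorAlgebra.ι K (e t) * equivExterior Q B ^ k = 0 :=
    ι_mul_pow_eq_zero_of_vectorContraction_eq_smul hB hk (hc0 t) (he t).apply_eq_smul
  have hindep : LinearIndepOn K e ((Finset.univ : Finset σ) : Set σ) := by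
    rw [Finset.coe_univ, linearIndepOn_univ_iff]
    exact Module.End.eigenvectors_linearIndependent' _ c hc e he
  have hcontract : associated Q (e s) ⌋ (equivExterior Q B ^ k) = 0 :=
    contractLeft_eq_zero_of_forall_ι_mul_eq_zero hindep hσ (pow_mem_exteriorPower hB k)
      (fun t _ => horth t) fun t _ => hkill t
  have hιW : ι Q (e s) * Wj Q B k = 0 := by
    refine (equivExterior Q).map_eq_zero_iff.1 ?_
    rw [equivExterior_ι_mul, equivExterior_Wj hB, mul_smul_comm, hkill, map_smul, hcontract,
      smul_zero, add_zero]
  have hι : ι Q (e s) = 0 := hreg (hιW.trans (zero_mul _).symm)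
  refine (he s).2 ((ExteriorAlgebra.ι_eq_zero_iff (R := K) (e s)).1 ?_)
  rw [← equivExterior_ι Q, hι, map_zero]

theorem associated_eq_zero_of_hasEigenvector (hB : equivExterior Q B ∈ ⋀[K]^2 M) {x y : M} {a b : K}
    (hx : (vectorContraction B).HasEigenvector a x)
    (hy : (vectorContraction B).HasEigenvector b y) (hab : a ≠ -b) : associated Q x y = 0 :=
  associated_eq_zero_of_vectorContraction_eq_smul hB hx.apply_eq_smul hy.apply_eq_smul
    fun h => hab (eq_neg_of_add_eq_zero_left h)

theorem associated_ne_zero_of_hasEigenvector_neg {k : ℕ} (hB : equivExterior Q B ∈ ⋀[K]^2 M)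
    (hk : equivExterior Q B ^ (k + 1) = 0) (hreg : IsRightRegular (Wj Q B k)) {μ : Fin k → K}
    (hinj : Function.Injective μ) (hneg : ∀ i j, μ i ≠ -μ j) {u w : Fin k → M}
    (hu : ∀ i, (vectorContraction B).HasEigenvector (μ i) (u i))
    (hw : ∀ i, (vectorContraction B).HasEigenvector (-μ i) (w i)) (i : Fin k) :
    associated Q (u i) (w i) ≠ 0 := by
  have hμ0 (i : Fin k) : μ i ≠ 0 := fun h => hneg i i (by rw [h, neg_zero])
  obtain ⟨j | j, hj⟩ := exists_associated_ne_zero_of_hasEigenvector hB hk hreg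
    (e := Sum.elim u w) (c := Sum.elim μ (-μ))
    (by rw [Fintype.card_sum, Fintype.card_fin, two_mul])
    (hinj.sumElim (neg_injective.comp hinj) hneg)
    (Sum.rec hμ0 fun i => neg_ne_zero.2 (hμ0 i)) (Sum.rec hu hw) (Sum.inl i)
  · exact absurd (associated_eq_zero_of_hasEigenvector hB (hu i) (hu j) (hneg i j)) hj
  · obtain rfl : i = j := by
      by_contra hij
      exact hj (associated_eq_zero_of_hasEigenvector hB (hu i) (hw j)
        fun h => hij (hinj (h.trans (neg_neg _))))
    exact hj

theorem exists_isHyperbolicFrame {k : ℕ} (hB : equivExterior Q B ∈ ⋀[K]^2 M)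
    (hk : equivExterior Q B ^ (k + 1) = 0) (hreg : IsRightRegular (Wj Q B k)) {μ : Fin k → K}
    (hinj : Function.Injective μ) (hneg : ∀ i j, μ i ≠ -μ j)
    (hμ : ∀ i, (vectorContraction B).HasEigenvalue (μ i))
    (hμ' : ∀ i, (vectorContraction B).HasEigenvalue (-μ i)) :
    ∃ u w : Fin k → M, IsHyperbolicFrame Q u w ∧
      (∀ i, vectorContraction B (u i) = μ i • u i) ∧
      ∀ i, vectorContraction B (w i) = -μ i • w i := by
  choose u hu using fun i => (hμ i).exists_hasEigenvector
  choose w hw using fun i => (hμ' i).exists_hasEigenvector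
  have huw := associated_ne_zero_of_hasEigenvector_neg hB hk hreg hinj hneg hu hw
  refine ⟨u, fun i => (associated Q (u i) (w i))⁻¹ • w i, ⟨?_, ?_, ?_, ?_⟩,
    fun i => (hu i).apply_eq_smul, fun i => ?_⟩
  · exact fun i j => associated_eq_zero_of_hasEigenvector hB (hu i) (hu j) (hneg i j)
  · intro i j
    have hww : associated Q (w i) (w j) = 0 :=
      associated_eq_zero_of_hasEigenvector hB (hw i) (hw j) fun h => hneg i j (neg_injective h)
    rw [map_smul, map_smul, LinearMap.smul_apply, hww, smul_zero, smul_zero]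
  · intro i
    rw [map_smul, smul_eq_mul, inv_mul_cancel₀ (huw i)]
  · intro i j hij
    have hne : μ i ≠ - -μ j := fun h => hij (hinj (h.trans (neg_neg _)))
    rw [map_smul, associated_eq_zero_of_hasEigenvector hB (hu i) (hw j) hne, smul_zero]
  · rw [map_smul, (hw i).apply_eq_smul, smul_comm]

end Frame

section OuterTangent

variable {K M : Type*} [Field K] [CharZero K] [AddCommGroup M] [Module K M]

/-- The outer tangent `ta∧(B) = si∧(B) co∧(B)⁻¹`; by the convention of `Ring.inverse` it is `0`
when `co∧(B)` is not invertible. As in `outerExp`, the terms `W_j` with `j > n` are omitted. -/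
def outerTan (Q : QuadraticForm K M) (n : ℕ) (B : CliffordAlgebra Q) : CliffordAlgebra Q :=
  siW Q n B * Ring.inverse (coW Q n B)

variable {Q : QuadraticForm K M}

theorem outerTan_eq_vectorWedge {B : CliffordAlgebra Q} (hB : equivExterior Q B ∈ ⋀[K]^2 M) {n : ℕ}
    (hn : equivExterior Q B ^ (n + 1) = 0) (hco : IsUnit (coW Q n B)) {u w : M}
    (hu : vectorContraction B u = u) (hw : vectorContraction B w = -w)
    (huw : associated Q u w = 1) : outerTan Q n B = vectorWedge Q w u := by
  have hw_mul : ι Q w * outerExp Q n B = 0 := ι_mul_outerExp_eq_zero hB hn hw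
  have hu_mul : ι Q u * outerExp Q n (-B) = 0 := by
    refine ι_mul_outerExp_eq_zero ?_ ?_ ?_
    · rw [map_neg]
      exact neg_mem hB
    · rw [map_neg, neg_pow, hn, mul_zero]
    · rw [← neg_one_smul K B, vectorContraction_smul, LinearMap.smul_apply, hu, neg_one_smul]
  have hmul : vectorWedge Q w u * coW Q n B = siW Q n B := by
    rw [coW, siW, mul_smul_comm, mul_add, vectorWedge_mul_of_left hw_mul,
      vectorWedge_mul_of_right hu_mul, QuadraticMap.associated_isSymm K, huw, one_smul, one_smul,
      sub_eq_add_neg]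
  rw [outerTan, ← hmul, Ring.mul_inverse_cancel_right _ _ hco]

end OuterTangent

section BaseChange

variable {R A M : Type*} [CommRing R] [CommRing A] [Algebra R A] [AddCommGroup M] [Module R M]

/-- The ring homomorphism `x ↦ 1 ⊗ x` from `⋀ M` to `⋀ (A ⊗ M)`. -/
def exteriorBaseChange (R A M : Type*) [CommRing R] [CommRing A] [Algebra R A] [AddCommGroup M]
    [Module R M] : ExteriorAlgebra R M →ₐ[R] ExteriorAlgebra A (A ⊗[R] M) :=
  ExteriorAlgebra.lift R
    ⟨(ExteriorAlgebra.ι A).restrictScalars R ∘ₗ TensorProduct.mk R A M 1, fun _ =>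
      ExteriorAlgebra.ι_sq_zero _⟩

theorem exteriorBaseChange_ι (v : M) : exteriorBaseChange R A M (ExteriorAlgebra.ι R v)
    = ExteriorAlgebra.ι A ((1 : A) ⊗ₜ v) :=
  ExteriorAlgebra.lift_ι_apply R _ _ v

theorem exteriorBaseChange_mem_exteriorPower_two {γ : ExteriorAlgebra R M} (hγ : γ ∈ ⋀[R]^2 M) :
    exteriorBaseChange R A M γ ∈ ⋀[A]^2 (A ⊗[R] M) := by
  refine exteriorPower_two_induction hγ (fun v w => ?_) fun x y hx hy => ?_
  · rw [map_mul, exteriorBaseChange_ι, exteriorBaseChange_ι]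
    exact ι_mul_ι_mem_exteriorPower _ _
  · rw [map_add]
    exact add_mem hx hy

variable [Invertible (2 : R)] {Q : QuadraticForm R M}

/-- The canonical map `x ↦ 1 ⊗ x` from `Cl(Q)` to the Clifford algebra of the base change
of `Q`. -/
def cliffordBaseChange (A : Type*) [CommRing A] [Algebra R A] (Q : QuadraticForm R M) :
    CliffordAlgebra Q →ₐ[R] CliffordAlgebra (Q.baseChange A) :=
  ((ofBaseChange A Q).restrictScalars R).comp Algebra.TensorProduct.includeRight

theorem cliffordBaseChange_ι (v : M) :
    cliffordBaseChange A Q (ι Q v) = ι (Q.baseChange A) ((1 : A) ⊗ₜ v) :=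
  ofBaseChange_tmul_ι A Q 1 v

variable [Invertible (2 : A)]

theorem cliffordBaseChange_vectorWedge (v w : M) :
    cliffordBaseChange A Q (vectorWedge Q v w)
      = vectorWedge (Q.baseChange A) ((1 : A) ⊗ₜ v) ((1 : A) ⊗ₜ w) := by
  have hassoc : associated (Q.baseChange A) ((1 : A) ⊗ₜ v) ((1 : A) ⊗ₜ w)
      = algebraMap R A (associated Q v w) := by
    rw [QuadraticForm.associated_baseChange]
    simp [Algebra.algebraMap_eq_smul_one]
  rw [vectorWedge, map_sub, map_mul, cliffordBaseChange_ι, cliffordBaseChange_ι, AlgHom.commutes,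
    vectorWedge, hassoc, ← IsScalarTower.algebraMap_apply]

theorem equivExterior_cliffordBaseChange {B : CliffordAlgebra Q}
    (hB : equivExterior Q B ∈ ⋀[R]^2 M) :
    equivExterior (Q.baseChange A) (cliffordBaseChange A Q B)
      = exteriorBaseChange R A M (equivExterior Q B) := by
  refine bivector_induction hB (fun v w => ?_) fun x y hx hy => ?_
  · rw [cliffordBaseChange_vectorWedge, equivExterior_vectorWedge, equivExterior_vectorWedge,
      map_mul, exteriorBaseChange_ι, exteriorBaseChange_ι]
  · simp only [map_add, hx, hy]

end BaseChange

section Complexification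

variable {p q r : ℕ} {B : CliffordAlgebra (sigQ p q r)}

theorem equivExterior_toC (hB : IsGrade (sigQ p q r) 2 B) :
    equivExterior (sigQc p q r) (toC p q r B)
      = exteriorBaseChange ℝ ℂ _ (equivExterior (sigQ p q r) B) :=
  equivExterior_cliffordBaseChange (isGrade_iff.1 hB)

theorem isGrade_toC (hB : IsGrade (sigQ p q r) 2 B) : IsGrade (sigQc p q r) 2 (toC p q r B) := by
  rw [isGrade_iff, equivExterior_toC hB]
  exact exteriorBaseChange_mem_exteriorPower_two (isGrade_iff.1 hB)

theorem Wj_toC_eq_zero (hB : IsGrade (sigQ p q r) 2 B) {j : ℕ} (h : Wj (sigQ p q r) B j = 0) :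
    Wj (sigQc p q r) (toC p q r B) j = 0 := by
  rw [Wj_eq_zero_iff (isGrade_iff.1 hB)] at h
  rw [Wj_eq_zero_iff (isGrade_iff.1 (isGrade_toC hB)), equivExterior_toC hB, ← map_pow, h, map_zero]

end Complexification

section Decomposition

variable {K M : Type*} [Field K] [CharZero K] [AddCommGroup M] [Module K M]
variable {Q : QuadraticForm K M} {B : CliffordAlgebra Q}

theorem isGrade_vectorWedge (v w : M) : IsGrade Q 2 (vectorWedge Q v w) := by
  rw [isGrade_iff, equivExterior_vectorWedge]
  exact ι_mul_ι_mem_exteriorPower v w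

theorem isGrade_smul {l : ℕ} {x : CliffordAlgebra Q} (hx : IsGrade Q l x) (c : K) :
    IsGrade Q l (c • x) := by
  rw [isGrade_iff] at hx ⊢
  rw [map_smul]
  exact Submodule.smul_mem _ c hx

theorem outerTan_inv_smul_eq_vectorWedge (hB : equivExterior Q B ∈ ⋀[K]^2 M) {n : ℕ}
    (hn : equivExterior Q B ^ (n + 1) = 0) {μ : K} (hμ : μ ≠ 0)
    (hco : IsUnit (coW Q n (μ⁻¹ • B))) {u w : M} (hu : vectorContraction B u = μ • u)
    (hw : vectorContraction B w = -μ • w) (huw : associated Q u w = 1) :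
    outerTan Q n (μ⁻¹ • B) = vectorWedge Q w u := by
  refine outerTan_eq_vectorWedge ?_ ?_ hco ?_ ?_ huw
  · rw [map_smul]
    exact Submodule.smul_mem _ _ hB
  · rw [map_smul, smul_pow, hn, smul_zero]
  · rw [vectorContraction_smul, LinearMap.smul_apply, hu, inv_smul_smul₀ hμ]
  · rw [vectorContraction_smul, LinearMap.smul_apply, hw, neg_smul, smul_neg, inv_smul_smul₀ hμ]

theorem exists_isHyperbolicFrame_of_roots [FiniteDimensional K M] {k : ℕ}
    (hB : equivExterior Q B ∈ ⋀[K]^2 M) (hk : equivExterior Q B ^ (k + 1) = 0) {μ : Fin k → K}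
    (hroots : ∀ c : K, Mpoly Q B k c * reverse (Mpoly Q B k c)
      = algebraMap K _ (∏ i, (c ^ 2 - μ i ^ 2)))
    (hinj : Function.Injective μ) (hneg : ∀ i j, μ i ≠ -μ j) :
    ∃ u w : Fin k → M, IsHyperbolicFrame Q u w ∧
      (∀ i, vectorContraction B (u i) = μ i • u i) ∧
      ∀ i, vectorContraction B (w i) = -μ i • w i := by
  have hμ0 (i : Fin k) : μ i ≠ 0 := fun h => hneg i i (by rw [h, neg_zero])
  have heigen {c : K} {i : Fin k} (hc : c ≠ 0) (hci : c ^ 2 = μ i ^ 2) :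
      (vectorContraction B).HasEigenvalue c := by
    refine hasEigenvalue_vectorContraction hB hk hc ?_
    rw [hroots, Finset.prod_eq_zero (Finset.mem_univ i) (sub_eq_zero.2 hci), map_zero]
  have hreg : IsRightRegular (Wj Q B k) := by
    rw [← Mpoly_zero]
    have hprod : ∏ i, ((0 : K) ^ 2 - μ i ^ 2) ≠ 0 := by
      refine Finset.prod_ne_zero_iff.2 fun i _ => ?_
      rw [zero_pow two_ne_zero, zero_sub]
      exact neg_ne_zero.2 (pow_ne_zero 2 (hμ0 i))
    refine IsRightRegular.of_mul (a := reverse (Mpoly Q B k 0)) ?_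
    rw [hroots 0]
    exact (hprod.isUnit.map (algebraMap K (CliffordAlgebra Q))).isRegular.right
  exact exists_isHyperbolicFrame hB hk hreg hinj hneg (fun i => heigen (hμ0 i) rfl)
    fun i => heigen (neg_ne_zero.2 (hμ0 i)) (neg_sq _)

theorem invariant_decomposition_general [FiniteDimensional K M] (hB : IsGrade Q 2 B) {k n : ℕ}
    (hk : Wj Q B (k + 1) = 0) (hn : Wj Q B (n + 1) = 0) {μ : Fin k → K}
    (hroots : ∀ c : K, Mpoly Q B k c * reverse (Mpoly Q B k c)
      = algebraMap K _ (∏ i, (c ^ 2 - μ i ^ 2)))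
    (hinj : Function.Injective μ) (hneg : ∀ i j, μ i ≠ -μ j)
    (hco : ∀ i, IsUnit (coW Q n ((μ i)⁻¹ • B))) :
    B = ∑ i, μ i • outerTan Q n ((μ i)⁻¹ • B) ∧
    (∀ i j, Commute (μ i • outerTan Q n ((μ i)⁻¹ • B)) (μ j • outerTan Q n ((μ j)⁻¹ • B))) ∧
    ∀ i, IsGrade Q 2 (μ i • outerTan Q n ((μ i)⁻¹ • B)) ∧
      (μ i • outerTan Q n ((μ i)⁻¹ • B)) * (μ i • outerTan Q n ((μ i)⁻¹ • B))
        = algebraMap K _ (μ i ^ 2) := by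
  have hμ0 (i : Fin k) : μ i ≠ 0 := fun h => hneg i i (by rw [h, neg_zero])
  rw [isGrade_iff] at hB
  rw [Wj_eq_zero_iff hB] at hk hn
  obtain ⟨u, w, hframe, hu, hw⟩ := exists_isHyperbolicFrame_of_roots hB hk hroots hinj hneg
  have htan (i : Fin k) : outerTan Q n ((μ i)⁻¹ • B) = vectorWedge Q (w i) (u i) :=
    outerTan_inv_smul_eq_vectorWedge hB hn (hμ0 i) (hco i) (hu i) (hw i) (hframe.left_right_self i)
  simp only [htan]
  refine ⟨hframe.eq_sum_vectorWedge hB hμ0 hu hw (by rwa [Fintype.card_fin]), fun i j => ?_,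
    fun i => ⟨?_, ?_⟩⟩
  · exact ((hframe.commute_vectorWedge i j).smul_left _).smul_right _
  · exact isGrade_smul (isGrade_vectorWedge _ _) _
  · rw [smul_mul_smul_comm, hframe.vectorWedge_mul_self, ← Algebra.algebraMap_eq_smul_one, pow_two]

end Decomposition

end

end GeometricAlgebra

open CliffordAlgebra in
/-- Invariant Decomposition: let `B` be a regular bivector (`W_k² ≠ 0`) of
effective dimension `2k` whose spectrum `{±μ₁, …, ±μ_k}` (the roots, with multiplicity, of
`P_{2k}(μ) = M_μ M̃_μ`) consists of `2k` pairwise distinct (hence nonzero) eigenvalues, and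
suppose each outer tangent `ta∧(B/μ_j)` exists.  Then `B = Σ_j b_j` with
`b_j := μ_j · ta∧(B/μ_j)`, and the `b_j` are commuting simple bivectors. -/
theorem invariant_decomposition (p q r : ℕ) (B : CliffordAlgebra (sigQ p q r))
    (hB : IsGrade (sigQ p q r) 2 B) (k : ℕ) (hk : HasEffDim (sigQ p q r) B k)
    (hreg : Wj (sigQ p q r) B k * Wj (sigQ p q r) B k ≠ 0)
    (μs : Fin k → ℂ)
    (hroots : ∀ μ : ℂ,
      Mpoly (sigQc p q r) (toC p q r B) k μ * reverse (Mpoly (sigQc p q r) (toC p q r B) k μ)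
        = algebraMap ℂ (CliffordAlgebra (sigQc p q r)) (∏ i : Fin k, (μ ^ 2 - μs i ^ 2)))
    (hdist₁ : ∀ i j : Fin k, μs i = μs j → i = j)
    (hdist₂ : ∀ i j : Fin k, μs i ≠ -μs j)
    (hco : ∀ j : Fin k, IsUnit (coW (sigQc p q r) (p + q + r) ((μs j)⁻¹ • toC p q r B)))
    (b : Fin k → CliffordAlgebra (sigQc p q r))
    (hb : ∀ j : Fin k, b j = μs j •
      (siW (sigQc p q r) (p + q + r) ((μs j)⁻¹ • toC p q r B)
        * Ring.inverse (coW (sigQc p q r) (p + q + r) ((μs j)⁻¹ • toC p q r B)))) :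
    toC p q r B = ∑ j : Fin k, b j ∧
    (∀ i j : Fin k, cprod (b i) (b j) = 0) ∧
    (∀ j : Fin k, IsGrade (sigQc p q r) 2 (b j) ∧
      ∃ c : ℂ, b j * b j = algebraMap ℂ (CliffordAlgebra (sigQc p q r)) c) := by
  obtain rfl : b = _ := funext hb
  have hBC := GeometricAlgebra.isGrade_toC hB
  have hn : Wj (sigQc p q r) (toC p q r B) (p + q + r + 1) = 0 := by
    refine GeometricAlgebra.Wj_eq_zero_of_finrank_lt (GeometricAlgebra.isGrade_iff.1 hBC) ?_
    rw [Module.finrank_baseChange, Module.finrank_fin_fun]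
    lia
  obtain ⟨hsum, hcomm, hsimple⟩ := GeometricAlgebra.invariant_decomposition_general hBC
    (GeometricAlgebra.Wj_toC_eq_zero hB (hk.2 _ k.lt_succ_self)) hn hroots hdist₁ hdist₂ hco
  refine ⟨hsum, fun i j => ?_, fun j => ⟨(hsimple j).1, μs j ^ 2, (hsimple j).2⟩⟩
  exact smul_eq_zero_of_right _ (sub_eq_zero_of_eq (hcomm i j))
end

section
/- If v_μ is an eigenvector of a bivector B in ℝ_{p,q,r} with eigenvalue μ ∈ ℂ, i.e. v_μ ≠ 0 and B × v_μ = μ v_μ, then either μ = 0 or v_μ is null, i.e. v_μ² = 0. -/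
/-! The commutator with `B` is a derivation, so the eigenvalues of two eigenvectors add up on their
product. Hence `v²` is an eigenvector of the commutator with eigenvalue twice that of `v`; but `v²`
is a scalar, so it commutes with `B`, and therefore its eigenvalue or `v²` itself vanishes. -/

section AssociativeAlgebra

variable {A : Type*} [Ring A]

theorem ring_lie_mul (x y z : A) : ⁅x, y * z⁆ = ⁅x, y⁆ * z + y * ⁅x, z⁆ := by
  simp only [Ring.lie_def]
  noncomm_ring

theorem ring_lie_mul_eq_add_smul {R : Type*} [CommSemiring R] [Algebra R A] {x y z : A} {a b : R}
    (hy : ⁅x, y⁆ = a • y) (hz : ⁅x, z⁆ = b • z) : ⁅x, y * z⁆ = (a + b) • (y * z) := by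
  rw [ring_lie_mul, hy, hz, smul_mul_assoc, mul_smul_comm, add_smul]

end AssociativeAlgebra

section CliffordAlgebra

open CliffordAlgebra

section CommRing

variable {R M : Type*} [CommRing R] [AddCommGroup M] [Module R M] {Q : QuadraticForm R M}

theorem commute_ι_mul_self (x : CliffordAlgebra Q) (v : M) : Commute x (ι Q v * ι Q v) := by
  rw [ι_sq_scalar]
  exact Algebra.commute_algebraMap_right _ _

theorem add_smul_ι_mul_self_eq_zero_of_lie_eq_smul {x : CliffordAlgebra Q} {a : R} {v : M}
    (h : ⁅x, ι Q v⁆ = a • ι Q v) : (a + a) • (ι Q v * ι Q v) = 0 := by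
  rw [← ring_lie_mul_eq_add_smul h h]
  exact commute_iff_lie_eq.mp (commute_ι_mul_self x v)

end CommRing

section Field

variable {K M : Type*} [Field K] [CharZero K] [AddCommGroup M] [Module K M]
  {Q : QuadraticForm K M}

theorem two_smul_cprod (x y : CliffordAlgebra Q) : (2 : K) • cprod x y = ⁅x, y⁆ :=
  smul_inv_smul₀ two_ne_zero _

theorem eigenvector_null_or_zero_eigenvalue_general {x : CliffordAlgebra Q} {μ : K} {v : M}
    (h : cprod x (ι Q v) = μ • ι Q v) : μ = 0 ∨ ι Q v * ι Q v = 0 := by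
  have lie_eq : ⁅x, ι Q v⁆ = (2 * μ) • ι Q v := by rw [← two_smul_cprod, h, smul_smul]
  have smul_sq_eq_zero := add_smul_ι_mul_self_eq_zero_of_lie_eq_smul lie_eq
  simpa only [smul_eq_zero, add_self_eq_zero, mul_eq_zero, two_ne_zero, false_or]
    using smul_sq_eq_zero

end Field

end CliffordAlgebra

open CliffordAlgebra TensorProduct in
/-- if `v` is an eigenvector (in the complexified algebra) of a bivector `B`
with eigenvalue `μ ∈ ℂ`, then either `μ = 0` or `v` is null, i.e. `v² = 0`. -/
theorem eigenvector_null_or_zero_eigenvalue (p q r : ℕ) (B : CliffordAlgebra (sigQ p q r))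
    (hB : IsGrade (sigQ p q r) 2 B) (μ : ℂ) (v : ℂ ⊗[ℝ] (Fin (p + q + r) → ℝ))
    (hv : IsEigen (sigQc p q r) (toC p q r B) μ v) :
    μ = 0 ∨ ι (sigQc p q r) v * ι (sigQc p q r) v = 0 := by
  exact eigenvector_null_or_zero_eigenvalue_general hv.2
end
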